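/- Let G be a finite simple graph on vertex set {1,…,n} with at least one edge, K a field, and R = K[x_1,…,x_n]. Then depth(R/J(G)) = n − reg(I(G)), where J(G) is the cover ideal and I(G) is the edge ideal of G. -/

import Mathlib

/-!
Both invariants are controlled by the independence complex of `G`, through the set `E` of vertex
sets containing an edge (`nonfaces G`).

* Depth sensitivity of the Koszul complex (`KVanish.of_isWeaklyRegular` and
  `KVanish.exists_isWeaklyRegular`): there is an `R/J`-regular sequence of length `e` in
  `(x_1,…,x_n)` if and only if `H_i(x; R/J) = 0` for all `i > n - e`.
* The Koszul complexes of `R/J` and of `I` split into multigraded pieces, and the pieces with a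
  non-squarefree multidegree are exact (`pexact_iff_squarefree`). In multidegree `W`, the homology
  of `R/J` in degree `i` is, by complementation of sets, the degree-`i` homology of the simplex on
  `W` relative to the link of the complement of `W` (`mexact_covers_iff`).
* In multidegree `W`, `Tor_i(I, K)` is dual, via the Hodge star of the simplex on `W`, to the
  degree `|W| - i` homology of the simplex on `W` relative to the restriction of the complex to `W`
  (`mexact_iff_lexact`). So `reg I` is the largest degree `t` in which the homology of some
  restriction is nonzero, degree being counted by the number of vertices.
* The long exact sequence connecting the restrictions to `B` and to `B ∪ {v}` with the link of `v`
  shows that all links have vanishing homology in degrees `≥ r` if and only if all restrictions do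
  (`links_iff_restrictions`).

Hence a regular sequence of length `e` exists if and only if `reg I ≤ n - e`. All homology groups
enter only through their vanishing, which is phrased as exactness of explicit complexes of functions
on finite sets.
-/

open MvPolynomial

/-- The Koszul differential on the Koszul complex of the variables `x_1,…,x_n` with
coefficients in an `R = K[x_1,…,x_n]`-module `M` (all homological degrees combined):
`(d f) T = ∑_{l ∉ T} (-1)^{#{m ∈ T : m < l}} x_l • f (T ∪ {l})`. -/
noncomputable def koszulD (K : Type*) [Field K] (n : ℕ) (M : Type*) [AddCommGroup M]
    [Module (MvPolynomial (Fin n) K) M] [Module K M]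
    [IsScalarTower K (MvPolynomial (Fin n) K) M] :
    (Finset (Fin n) → M) →ₗ[K] (Finset (Fin n) → M) where
  toFun f T := ∑ l ∈ Tᶜ,
    ((-1 : ℤ) ^ (T.filter (· < l)).card) • ((X l : MvPolynomial (Fin n) K) • f (insert l T))
  map_add' f g := by
    funext T
    simp [Pi.add_apply, smul_add, Finset.sum_add_distrib]
  map_smul' c f := by
    funext T
    simp only [Pi.smul_apply, RingHom.id_apply, Finset.smul_sum]
    refine Finset.sum_congr rfl fun l _ => ?_
    rw [smul_comm (X l : MvPolynomial (Fin n) K) c (f (insert l T)),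
      smul_comm ((-1 : ℤ) ^ (T.filter (· < l)).card) c]

/-- The piece of the Koszul complex in homological degree `i` and internal degree `j`,
where `V : ℤ → Submodule K M` records the graded pieces of `M` (the exterior generator
`e_S`, `|S| = i`, has internal degree `i`, so its coefficient lies in degree `j - i`). -/
noncomputable def koszulPart (K : Type*) [Field K] (n : ℕ) (M : Type*) [AddCommGroup M]
    [Module K M] (V : ℤ → Submodule K M) (i : ℕ) (j : ℤ) :
    Submodule K (Finset (Fin n) → M) where
  carrier := {f | ∀ S : Finset (Fin n), if S.card = i then f S ∈ V (j - i) else f S = 0}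
  add_mem' := by
    intro a b ha hb S
    have h1 := ha S
    have h2 := hb S
    by_cases h : S.card = i <;> simp_all [Pi.add_apply, Submodule.add_mem]
  zero_mem' := by
    intro S
    by_cases h : S.card = i <;> simp [h]
  smul_mem' := by
    intro c a ha S
    have h1 := ha S
    by_cases h : S.card = i <;> simp_all [Pi.smul_apply, Submodule.smul_mem]

/-- The graded Betti number `β_{i,j}(M) = dim_K Tor_i(M, K)_j` — the number of degree-`j`
generators of the `i`-th module in the minimal graded free resolution of the graded module
`M` with graded pieces `V` — computed as the dimension of the degree-`j` part of the `i`-th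
Koszul homology of `M`. -/
noncomputable def gradedBetti (K : Type*) [Field K] (n : ℕ) (M : Type*) [AddCommGroup M]
    [Module (MvPolynomial (Fin n) K) M] [Module K M]
    [IsScalarTower K (MvPolynomial (Fin n) K) M]
    (V : ℤ → Submodule K M) (i : ℕ) (j : ℤ) : ℕ :=
  let Z : Submodule K (Finset (Fin n) → M) :=
    LinearMap.ker (koszulD K n M) ⊓ koszulPart K n M V i j
  let B : Submodule K (Finset (Fin n) → M) :=
    Submodule.map (koszulD K n M) (koszulPart K n M V (i + 1) j)
  Module.finrank K (Z ⧸ (B.comap Z.subtype))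

/-- The degree-`j` graded piece of `R/J`, for homogeneous `J`. -/
noncomputable def quotGrading (K : Type*) [Field K] (n : ℕ)
    (J : Ideal (MvPolynomial (Fin n) K)) (j : ℤ) :
    Submodule K ((MvPolynomial (Fin n) K) ⧸ J) :=
  if 0 ≤ j then
    Submodule.map ((J.mkQ).restrictScalars K) (homogeneousSubmodule (Fin n) K j.toNat)
  else ⊥

/-- The degree-`j` graded piece of a homogeneous ideal `I ⊆ R`. -/
noncomputable def idealGrading (K : Type*) [Field K] (n : ℕ)
    (I : Ideal (MvPolynomial (Fin n) K)) (j : ℤ) :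
    Submodule K (MvPolynomial (Fin n) K) :=
  if 0 ≤ j then (Submodule.restrictScalars K I) ⊓ homogeneousSubmodule (Fin n) K j.toNat
  else ⊥

/-- The graded Betti numbers `β_{i,j}(R/J)`. -/
noncomputable def bettiQuot (K : Type*) [Field K] (n : ℕ)
    (J : Ideal (MvPolynomial (Fin n) K)) (i : ℕ) (j : ℤ) : ℕ :=
  gradedBetti K n ((MvPolynomial (Fin n) K) ⧸ J) (quotGrading K n J) i j

/-- The graded Betti numbers `β_{i,j}(I)` of a homogeneous ideal `I ⊆ R`. -/
noncomputable def bettiIdeal (K : Type*) [Field K] (n : ℕ)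
    (I : Ideal (MvPolynomial (Fin n) K)) (i : ℕ) (j : ℤ) : ℕ :=
  gradedBetti K n (MvPolynomial (Fin n) K) (idealGrading K n I) i j

/-- The projective dimension of `R/J`: the length of its minimal graded free resolution,
i.e. the largest homological degree `i` with `β_{i,j}(R/J) ≠ 0` for some `j`. -/
noncomputable def pdQuot (K : Type*) [Field K] (n : ℕ)
    (J : Ideal (MvPolynomial (Fin n) K)) : ℕ :=
  sSup {i : ℕ | ∃ j : ℤ, bettiQuot K n J i j ≠ 0}

/-- The Castelnuovo–Mumford regularity of a homogeneous ideal `I ⊆ R`: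
`reg(I) = max{ j - i : β_{i,j}(I) ≠ 0 }`. -/
noncomputable def regIdeal (K : Type*) [Field K] (n : ℕ)
    (I : Ideal (MvPolynomial (Fin n) K)) : ℤ :=
  sSup {d : ℤ | ∃ (i : ℕ) (j : ℤ), bettiIdeal K n I i j ≠ 0 ∧ d = j - (i : ℤ)}

/-- The edge ideal `I(G) = (x_u x_v : {u,v} ∈ E(G)) ⊆ K[x_1,…,x_n]`. -/
noncomputable def edgeIdeal (K : Type*) [Field K] {n : ℕ} (G : SimpleGraph (Fin n)) :
    Ideal (MvPolynomial (Fin n) K) :=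
  Ideal.span {p | ∃ u v : Fin n, G.Adj u v ∧ p = X u * X v}

/-- The cover ideal `J(G) = ⋂_{{u,v} ∈ E(G)} (x_u, x_v) ⊆ K[x_1,…,x_n]`. -/
noncomputable def coverIdeal (K : Type*) [Field K] {n : ℕ} (G : SimpleGraph (Fin n)) :
    Ideal (MvPolynomial (Fin n) K) :=
  ⨅ (u : Fin n) (v : Fin n) (_ : G.Adj u v), Ideal.span {X u, X v}

/-- The maximal homogeneous ideal `(x_1,…,x_n)` of `K[x_1,…,x_n]`. -/
noncomputable def maxIdeal (K : Type*) [Field K] (n : ℕ) : Ideal (MvPolynomial (Fin n) K) :=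
  Ideal.span (Set.range (X : Fin n → MvPolynomial (Fin n) K))

/-- `depth(R/I)` with respect to the maximal homogeneous ideal: the supremum of the
lengths of `R/I`-regular sequences consisting of elements of `(x_1,…,x_n)`. -/
noncomputable def depthQuot (K : Type*) [Field K] (n : ℕ)
    (I : Ideal (MvPolynomial (Fin n) K)) : ℕ :=
  sSup {d : ℕ | ∃ rs : List (MvPolynomial (Fin n) K), rs.length = d ∧
    (∀ r ∈ rs, r ∈ maxIdeal K n) ∧
    RingTheory.Sequence.IsRegular ((MvPolynomial (Fin n) K) ⧸ I) rs}

/-! ### Contraction and wedge operators on the exterior algebra, and the Koszul differential -/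

section Operators

variable {n : ℕ}

/-- The Koszul sign `(-1)^{#{m ∈ T : m < l}}`. -/
def ksgn (l : Fin n) (T : Finset (Fin n)) : ℤ := (-1) ^ (T.filter (· < l)).card

lemma ksgn_mul_self (l : Fin n) (T : Finset (Fin n)) : ksgn l T * ksgn l T = 1 := by
  unfold ksgn; rw [← mul_pow]; simp

lemma ksgn_insert_self (l : Fin n) (T : Finset (Fin n)) : ksgn l (insert l T) = ksgn l T := by
  unfold ksgn; rw [Finset.filter_insert]; simp

lemma ksgn_insert_of_gt {l k : Fin n} (T : Finset (Fin n)) (h : l < k) :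
    ksgn l (insert k T) = ksgn l T := by
  unfold ksgn; rw [Finset.filter_insert, if_neg (not_lt.mpr h.le)]

lemma ksgn_insert_of_lt {l k : Fin n} {T : Finset (Fin n)} (hk : k ∉ T) (h : k < l) :
    ksgn l (insert k T) = - ksgn l T := by
  unfold ksgn
  rw [Finset.filter_insert, if_pos h, Finset.card_insert_of_notMem (by simp [hk]), pow_succ]
  simp

/-- The sign rule behind all anticommutation relations. -/
lemma ksgn_swap {l k : Fin n} {T : Finset (Fin n)} (hlk : l ≠ k) (hl : l ∉ T) (hk : k ∉ T) :
    ksgn l T * ksgn k (insert l T) = - (ksgn k T * ksgn l (insert k T)) := by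
  rcases lt_or_gt_of_ne hlk with h | h
  · rw [ksgn_insert_of_lt hl h, ksgn_insert_of_gt T h]; ring
  · rw [ksgn_insert_of_lt hk h, ksgn_insert_of_gt T h]; ring

variable {R : Type*} [CommRing R] {M : Type*} [AddCommGroup M] [Module R M]

/-- Contraction by the `l`-th basis vector on `M ⊗ ⋀ Rⁿ`; an element of `M ⊗ ⋀ Rⁿ` is encoded as
the function sending `S` to its coefficient at `e_S`. -/
def contr (R : Type*) [CommRing R] {M : Type*} [AddCommGroup M] [Module R M] (l : Fin n) :
    (Finset (Fin n) → M) →ₗ[R] (Finset (Fin n) → M) where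
  toFun f T := if l ∈ T then 0 else ksgn l T • f (insert l T)
  map_add' f g := by funext T; by_cases h : l ∈ T <;> simp [h]
  map_smul' c f := by
    funext T; by_cases h : l ∈ T
    · simp [h]
    · simp [h, smul_comm (ksgn l T) c]

/-- Exterior multiplication by the `l`-th basis vector on `M ⊗ ⋀ Rⁿ`. -/
def wedge (R : Type*) [CommRing R] {M : Type*} [AddCommGroup M] [Module R M] (l : Fin n) :
    (Finset (Fin n) → M) →ₗ[R] (Finset (Fin n) → M) where
  toFun f T := if l ∈ T then ksgn l T • f (T.erase l) else 0
  map_add' f g := by funext T; by_cases h : l ∈ T <;> simp [h]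
  map_smul' c f := by
    funext T; by_cases h : l ∈ T
    · simp [h, smul_comm (ksgn l T) c]
    · simp [h]

lemma contr_apply (l : Fin n) (f : Finset (Fin n) → M) (T : Finset (Fin n)) :
    contr R l f T = if l ∈ T then 0 else ksgn l T • f (insert l T) := rfl

lemma wedge_apply (l : Fin n) (f : Finset (Fin n) → M) (T : Finset (Fin n)) :
    wedge R l f T = if l ∈ T then ksgn l T • f (T.erase l) else 0 := rfl

lemma contr_self (l : Fin n) (f : Finset (Fin n) → M) : contr R l (contr R l f) = 0 := by
  funext T
  by_cases h : l ∈ T <;> simp [contr_apply, h]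

lemma contr_anticomm {l k : Fin n} (hlk : l ≠ k) (f : Finset (Fin n) → M) :
    contr R l (contr R k f) = - contr R k (contr R l f) := by
  funext T
  by_cases h1 : l ∈ T
  · by_cases h2 : k ∈ T <;> simp [contr_apply, h1, h2]
  by_cases h2 : k ∈ T
  · simp [contr_apply, h1, h2]
  simp only [contr_apply, Pi.neg_apply, h1, h2, if_false, Finset.mem_insert, hlk, hlk.symm,
    false_or, smul_smul]
  rw [ksgn_swap hlk h1 h2, Finset.insert_comm, neg_smul]

lemma contr_wedge_self (l : Fin n) (f : Finset (Fin n) → M) :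
    contr R l (wedge R l f) + wedge R l (contr R l f) = f := by
  funext T
  by_cases h : l ∈ T
  · have e : ksgn l T = ksgn l (T.erase l) := by
      conv_lhs => rw [← Finset.insert_erase h]
      exact ksgn_insert_self _ _
    simp only [Pi.add_apply, contr_apply, wedge_apply, h, if_true, Finset.notMem_erase, if_false,
      Finset.insert_erase h, smul_smul, zero_add]
    rw [← e, ksgn_mul_self, one_smul]
  · simp [contr_apply, wedge_apply, h, smul_smul, ksgn_insert_self, ksgn_mul_self]

lemma contr_wedge_of_ne {l k : Fin n} (hlk : l ≠ k) (f : Finset (Fin n) → M) :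
    contr R l (wedge R k f) + wedge R k (contr R l f) = 0 := by
  funext T
  by_cases h1 : l ∈ T
  · by_cases h2 : k ∈ T <;> simp [contr_apply, wedge_apply, h1, h2, hlk]
  by_cases h2 : k ∈ T
  · obtain ⟨T', hT', rfl⟩ : ∃ T', k ∉ T' ∧ T = insert k T' :=
      ⟨T.erase k, Finset.notMem_erase _ _, (Finset.insert_erase h2).symm⟩
    have h1' : l ∉ T' := fun h => h1 (Finset.mem_insert_of_mem h)
    simp only [Pi.add_apply, contr_apply, wedge_apply, h1, h2, if_true, if_false, smul_smul,
      Finset.mem_insert_of_mem h2, Finset.erase_insert hT', h1', Pi.zero_apply]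
    rw [Finset.insert_comm, Finset.erase_insert (by simp [hT', hlk.symm]), ← add_smul]
    have e : ksgn l (insert k T') * ksgn k (insert k (insert l T'))
        + ksgn k (insert k T') * ksgn l T' = 0 := by
      rw [ksgn_insert_self, ksgn_insert_self]
      rcases lt_or_gt_of_ne hlk with h | h
      · rw [ksgn_insert_of_lt h1' h, ksgn_insert_of_gt _ h]; ring
      · rw [ksgn_insert_of_lt hT' h, ksgn_insert_of_gt _ h]; ring
    rw [e, zero_smul]
  · simp [contr_apply, wedge_apply, h1, h2, hlk.symm]

/-- The Koszul differential of a sequence `x` acting on `M`, as the sum `∑ x_l • contr_l`. -/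
def kd (x : Fin n → R) : (Finset (Fin n) → M) →ₗ[R] (Finset (Fin n) → M) :=
  ∑ l, x l • contr R l

lemma kd_eq (x : Fin n → R) (f : Finset (Fin n) → M) : kd x f = ∑ l, x l • contr R l f := by
  simp [kd]

lemma kd_apply (x : Fin n → R) (f : Finset (Fin n) → M) (T : Finset (Fin n)) :
    kd x f T = ∑ l, x l • contr R l f T := by
  simp [kd_eq]

lemma kd_kd (x : Fin n → R) (f : Finset (Fin n) → M) : kd x (kd x f) = 0 := by
  simp only [kd_eq, map_sum, map_smul, Finset.smul_sum, smul_smul]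
  rw [← Finset.sum_product']
  refine Finset.sum_involution (fun p _ => (p.2, p.1)) ?_ ?_ (by simp) (by simp)
  · rintro ⟨l, k⟩ -
    by_cases h : l = k
    · subst h; simp [contr_self]
    · simp only
      rw [contr_anticomm h, mul_comm (x k)]; simp
  · rintro ⟨l, k⟩ - h0 h
    apply h0
    obtain rfl : k = l := by simpa using congrArg Prod.fst h
    simp [contr_self]

/-- Exterior multiplication by `e_k` is a homotopy from multiplication by `x_k` to zero. -/
lemma kd_wedge (x : Fin n → R) (k : Fin n) (f : Finset (Fin n) → M) :
    kd x (wedge R k f) + wedge R k (kd x f) = x k • f := by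
  simp only [kd_eq, map_sum, map_smul, ← Finset.sum_add_distrib, ← smul_add]
  rw [Finset.sum_eq_single k]
  · rw [contr_wedge_self]
  · intro l _ h
    rw [contr_wedge_of_ne h, smul_zero]
  · simp

lemma contr_kd (x : Fin n → R) (k : Fin n) (f : Finset (Fin n) → M) :
    contr R k (kd x f) = - kd x (contr R k f) := by
  simp only [kd_eq, map_sum, map_smul, ← Finset.sum_neg_distrib, ← smul_neg]
  refine Finset.sum_congr rfl fun l _ => ?_
  by_cases h : l = k
  · subst h; simp [contr_self]
  · rw [contr_anticomm h, neg_neg]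

end Operators
/-! ### Depth sensitivity of the Koszul complex -/

section Depth

open scoped Pointwise

variable {n : ℕ} {R : Type*} [CommRing R]

/-- Chains of homological degree `i`: functions supported on subsets of cardinality `i`. -/
def IsDeg {M : Type*} [Zero M] (i : ℕ) (f : Finset (Fin n) → M) : Prop :=
  ∀ S, f S ≠ 0 → S.card = i

section
variable {M : Type*} [AddCommGroup M] [Module R M]

lemma IsDeg.add {i : ℕ} {f g : Finset (Fin n) → M} (hf : IsDeg i f) (hg : IsDeg i g) :
    IsDeg i (f + g) := by
  intro S hS
  by_contra h
  have h1 : f S = 0 := not_not.mp fun h' => h (hf S h')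
  have h2 : g S = 0 := not_not.mp fun h' => h (hg S h')
  simp [h1, h2] at hS

lemma IsDeg.smul {i : ℕ} {f : Finset (Fin n) → M} (hf : IsDeg i f) (c : R) :
    IsDeg i (c • f) := fun S hS => hf S fun h => hS (by simp [h])

lemma IsDeg.neg {i : ℕ} {f : Finset (Fin n) → M} (hf : IsDeg i f) :
    IsDeg i (-f) := fun S hS => hf S fun h => hS (by simp [h])

lemma IsDeg.sub {i : ℕ} {f g : Finset (Fin n) → M} (hf : IsDeg i f) (hg : IsDeg i g) :
    IsDeg i (f - g) := by rw [sub_eq_add_neg]; exact hf.add hg.neg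

lemma IsDeg.zero {i : ℕ} : IsDeg i (0 : Finset (Fin n) → M) := fun _ hS => absurd rfl hS

lemma IsDeg.sum {ι : Type*} {s : Finset ι} {i : ℕ} {f : ι → Finset (Fin n) → M}
    (hf : ∀ a ∈ s, IsDeg i (f a)) : IsDeg i (∑ a ∈ s, f a) := by
  classical
  induction s using Finset.induction_on with
  | empty => simpa using IsDeg.zero
  | insert a s ha ih =>
    rw [Finset.sum_insert ha]
    exact (hf a (by simp)).add (ih fun b hb => hf b (by simp [hb]))

lemma IsDeg.contr {i : ℕ} {f : Finset (Fin n) → M} (hf : IsDeg (i + 1) f) (l : Fin n) :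
    IsDeg i (contr R l f) := by
  intro S hS
  rw [contr_apply] at hS
  split_ifs at hS with h
  · exact absurd rfl hS
  · have := hf (insert l S) fun h' => hS (by simp [h'])
    rw [Finset.card_insert_of_notMem h] at this
    omega

lemma IsDeg.wedge {i : ℕ} {f : Finset (Fin n) → M} (hf : IsDeg i f) (l : Fin n) :
    IsDeg (i + 1) (wedge R l f) := by
  intro S hS
  rw [wedge_apply] at hS
  split_ifs at hS with h
  · have := hf (S.erase l) fun h' => hS (by simp [h'])
    rw [← this, Finset.card_erase_add_one h]
  · exact absurd rfl hS

lemma IsDeg.kd {i : ℕ} {f : Finset (Fin n) → M} (hf : IsDeg (i + 1) f) (x : Fin n → R) :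
    IsDeg i (kd x f) := by
  rw [kd_eq]
  exact IsDeg.sum fun l _ => (hf.contr l).smul _

lemma kd_isDeg_zero {f : Finset (Fin n) → M} (hf : IsDeg 0 f) (x : Fin n → R) :
    kd x f = 0 := by
  funext T
  rw [kd_apply]
  refine Finset.sum_eq_zero fun l _ => ?_
  rw [contr_apply]
  split_ifs
  · simp
  · rw [not_not.mp fun h => absurd (hf _ h) (by simp)]; simp

end

/-- The Koszul homology `H_i(x; M)` vanishes. -/
def KExact (x : Fin n → R) (M : Type*) [AddCommGroup M] [Module R M] (i : ℕ) : Prop :=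
  ∀ f : Finset (Fin n) → M, IsDeg i f → kd x f = 0 → ∃ u, IsDeg (i + 1) u ∧ kd x u = f

/-- `H_i(x; M) = 0` for all `i > n - e`. -/
def KVanish (x : Fin n → R) (M : Type*) [AddCommGroup M] [Module R M] (e : ℕ) : Prop :=
  ∀ i, n < i + e → KExact x M i

lemma kd_comp {x : Fin n → R} {M N : Type*} [AddCommGroup M] [Module R M]
    [AddCommGroup N] [Module R N] (φ : M →ₗ[R] N) (f : Finset (Fin n) → M) :
    kd x (fun S => φ (f S)) = fun S => φ (kd x f S) := by
  funext T
  rw [kd_apply, kd_apply, map_sum]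
  refine Finset.sum_congr rfl fun l _ => ?_
  rw [contr_apply, contr_apply, map_smul]
  split_ifs <;> simp

lemma exists_lift {M N : Type*} [AddCommGroup M] [Module R M]
    [AddCommGroup N] [Module R N] (φ : M →ₗ[R] N) (hφ : Function.Surjective φ) {i : ℕ}
    (f : Finset (Fin n) → N) (hf : IsDeg i f) :
    ∃ g : Finset (Fin n) → M, IsDeg i g ∧ (fun S => φ (g S)) = f := by
  classical
  choose s hs using hφ
  refine ⟨fun S => if f S = 0 then 0 else s (f S), ?_, ?_⟩
  · intro S hS
    refine hf S fun h => hS (by simp [h])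
  · funext S
    by_cases h : f S = 0 <;> simp [h, hs]

variable {M : Type*} [AddCommGroup M] [Module R M]

/-- A chain that vanishes modulo `r` is `r` times a chain of the same degree. -/
lemma exists_eq_smul {r : R} {i : ℕ} {f : Finset (Fin n) → M} (hf : IsDeg i f)
    (h : ∀ S, (Submodule.mkQ (r • (⊤ : Submodule R M))) (f S) = 0) :
    ∃ g : Finset (Fin n) → M, IsDeg i g ∧ f = r • g := by
  have h' : ∀ S, ∃ y : M, r • y = f S := by
    intro S
    have := (Submodule.Quotient.mk_eq_zero _).mp (h S)
    obtain ⟨y, -, hy⟩ := (Submodule.mem_smul_pointwise_iff_exists _ _ _).mp this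
    exact ⟨y, hy⟩
  classical
  choose s hs using h'
  refine ⟨fun S => if f S = 0 then 0 else s S, fun S hS => hf S fun h => hS (by simp [h]), ?_⟩
  funext S
  by_cases h : f S = 0 <;> simp [h, hs]

lemma KVanish.quot {x : Fin n → R} {r : R} (hr : IsSMulRegular M r) {e : ℕ}
    (h : KVanish x M (e + 1)) : KVanish x (QuotSMulTop r M) e := by
  intro i hi fbar hdeg hcyc
  set π := Submodule.mkQ (r • (⊤ : Submodule R M)) with hπ
  have hsurj : Function.Surjective π := Submodule.mkQ_surjective _
  have hπr : ∀ m : M, π (r • m) = 0 := fun m =>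
    (Submodule.Quotient.mk_eq_zero _).mpr (Submodule.smul_mem_pointwise_smul _ _ _ trivial)
  obtain ⟨f, hf, rfl⟩ := exists_lift π hsurj fbar hdeg
  rw [kd_comp] at hcyc
  rcases i with _ | i
  · obtain ⟨u, hu, hu'⟩ := h 0 (by omega) f hf (kd_isDeg_zero hf x)
    refine ⟨fun S => π (u S), fun S hS => hu S fun h => hS (by simp [h]), ?_⟩
    rw [kd_comp, hu']
  · obtain ⟨g, hg, hg'⟩ := exists_eq_smul (r := r) (hf.kd x) (fun S => congrFun hcyc S)
    have hdg : kd x g = 0 := by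
      have h1 : r • kd x g = 0 := by rw [← map_smul, ← hg', kd_kd]
      funext S
      exact hr (by simpa using congrFun h1 S)
    obtain ⟨v, hv, hv'⟩ := h i (by omega) g hg hdg
    obtain ⟨u, hu, hu'⟩ := h (i + 1) (by omega) (f - r • v) (hf.sub (hv.smul r)) (by
      rw [map_sub, map_smul, hv', hg', sub_self])
    refine ⟨fun S => π (u S), fun S hS => hu S fun h => hS (by simp [h]), ?_⟩
    rw [kd_comp, hu']
    funext S
    rw [Pi.sub_apply, map_sub, Pi.smul_apply, hπr, sub_zero]

/-- As `r ∈ (x)`, exterior multiplication gives for each cycle `g` on `M` a chain `H` with boundary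
`r g`. Modulo `r` it is a cycle, hence a boundary there, so up to a boundary `H = r v`; regularity
of `r` then yields that `g` is the boundary of `v`. -/
lemma KVanish.of_quot {x : Fin n → R} {r : R} (hr : IsSMulRegular M r)
    (hrx : r ∈ Ideal.span (Set.range x)) {e : ℕ}
    (h : KVanish x (QuotSMulTop r M) e) : KVanish x M (e + 1) := by
  intro i hi g hg hcyc
  set π := Submodule.mkQ (r • (⊤ : Submodule R M)) with hπ
  have hsurj : Function.Surjective π := Submodule.mkQ_surjective _
  have hπr : ∀ m : M, π (r • m) = 0 := fun m =>
    (Submodule.Quotient.mk_eq_zero _).mpr (Submodule.smul_mem_pointwise_smul _ _ _ trivial)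
  obtain ⟨c, hc⟩ := (Ideal.mem_span_range_iff_exists_fun).mp hrx
  set H : Finset (Fin n) → M := ∑ l, c l • wedge R l g with hH
  have hHdeg : IsDeg (i + 1) H := IsDeg.sum fun l _ => (hg.wedge l).smul _
  have hdH : kd x H = r • g := by
    rw [hH, map_sum, ← hc, Finset.sum_smul]
    refine Finset.sum_congr rfl fun l _ => ?_
    have := kd_wedge x l g
    rw [hcyc, map_zero, add_zero] at this
    rw [map_smul, this, smul_smul]
  obtain ⟨ubar, hubar, hu'⟩ := h (i + 1) (by omega) (fun S => π (H S))
    (fun S hS => hHdeg S fun h => hS (by simp [h])) (by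
      rw [kd_comp, hdH]; funext S; exact hπr _)
  obtain ⟨u, hu, rfl⟩ := exists_lift π hsurj ubar hubar
  rw [kd_comp] at hu'
  obtain ⟨v, hv, hv'⟩ := exists_eq_smul (r := r) (hHdeg.sub (hu.kd x)) (fun S => by
    rw [Pi.sub_apply, map_sub, sub_eq_zero]; exact (congrFun hu' S).symm)
  refine ⟨v, hv, ?_⟩
  have h1 : r • kd x v = r • g := by
    rw [← map_smul, ← hv', map_sub, kd_kd, sub_zero, hdH]
  funext S
  exact hr (congrFun h1 S)

lemma KVanish.zero (x : Fin n → R) : KVanish x M 0 := by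
  intro i hi f hf _
  refine ⟨0, IsDeg.zero, ?_⟩
  rw [map_zero]
  funext S
  by_contra h
  have h1 := hf S (Ne.symm h)
  have := Finset.card_le_univ S
  simp at this
  omega

lemma KVanish.of_isWeaklyRegular {x : Fin n → R} (rs : List R)
    (hrs : ∀ r ∈ rs, r ∈ Ideal.span (Set.range x))
    {M : Type*} [AddCommGroup M] [Module R M]
    (h : RingTheory.Sequence.IsWeaklyRegular M rs) : KVanish x M rs.length := by
  induction rs generalizing M with
  | nil => exact KVanish.zero x
  | cons r rs ih =>
    rw [RingTheory.Sequence.isWeaklyRegular_cons_iff] at h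
    exact KVanish.of_quot h.1 (hrs r (by simp)) (ih (fun s hs => hrs s (by simp [hs])) h.2)

/-- If `H_n(x; M) = 0`, then no nonzero element of `M` is killed by all the `x_l`. -/
lemma KVanish.socle {x : Fin n → R} (h : KVanish x M 1) (m : M) (hm : ∀ l, x l • m = 0) :
    m = 0 := by
  classical
  obtain ⟨u, hu, hu'⟩ := h n (by omega) (fun S => if S = Finset.univ then m else 0)
    (fun S hS => by
      have : S = Finset.univ := by by_contra h; simp [h] at hS
      simp [this]) (by
      funext T
      rw [kd_apply]
      refine Finset.sum_eq_zero fun l _ => ?_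
      rw [contr_apply]
      split_ifs
      · simp
      · rw [smul_comm, hm, smul_zero]
      · simp)
  have hu0 : u = 0 := by
    funext S
    by_contra h
    have h1 := hu S h
    have := Finset.card_le_univ S
    simp at this
    omega
  have := congrFun hu' Finset.univ
  simpa [hu0] using this.symm

/-- Prime avoidance: if no nonzero element of `M` is killed by `(x)`, then `(x)` contains an
`M`-regular element. -/
lemma exists_regular [IsNoetherianRing R] [Module.Finite R M] {x : Fin n → R}
    (h : ∀ m : M, (∀ l, x l • m = 0) → m = 0) :
    ∃ r ∈ Ideal.span (Set.range x), IsSMulRegular M r := by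
  by_contra! hcon
  have hsub : ((Ideal.span (Set.range x) : Ideal R) : Set R) ⊆
      ⋃ p ∈ associatedPrimes R M, p := by
    intro r hr
    rw [biUnion_associatedPrimes_eq_compl_regular]
    exact hcon r hr
  obtain ⟨p, hp, hle⟩ := (Ideal.subset_union_prime_finite (associatedPrimes.finite R M) (f := id)
    0 0 fun _ h _ _ => h.isPrime).1 hsub
  obtain ⟨hpp, m, hm⟩ := (isAssociatedPrime_iff ..).mp hp
  have h0 : m = 0 := h m fun l => by
    have : x l ∈ p := hle (Ideal.subset_span ⟨l, rfl⟩)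
    rw [hm] at this
    simpa using this
  apply hpp.ne_top
  rw [hm, h0]
  ext; simp

lemma KVanish.exists_isWeaklyRegular [IsNoetherianRing R] {x : Fin n → R} (d : ℕ)
    {M : Type*} [AddCommGroup M] [Module R M] [Module.Finite R M] (h : KVanish x M d) :
    ∃ rs : List R, rs.length = d ∧ (∀ r ∈ rs, r ∈ Ideal.span (Set.range x)) ∧
      RingTheory.Sequence.IsWeaklyRegular M rs := by
  induction d generalizing M with
  | zero => exact ⟨[], rfl, by simp, RingTheory.Sequence.IsWeaklyRegular.nil R M⟩
  | succ d ih =>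
    obtain ⟨r, hrx, hr⟩ := exists_regular (x := x) (M := M)
      (KVanish.socle fun i hi => h i (by omega))
    obtain ⟨rs, h1, h2, h3⟩ := ih (KVanish.quot hr h)
    refine ⟨r :: rs, by simp [h1], ?_, h3.cons hr⟩
    intro s hs
    rcases List.mem_cons.mp hs with rfl | hs
    · exact hrx
    · exact h2 s hs

end Depth
/-! ### Multigraded decomposition of Koszul complexes of squarefree monomial ideals -/

section Multigraded

variable {n : ℕ} {K : Type*} [Field K]

/-- The exponent vector `1_S` of the squarefree monomial `x_S`. -/
noncomputable def ind (S : Finset (Fin n)) : Fin n →₀ ℕ :=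
  Finsupp.equivFunOnFinite.symm fun l => if l ∈ S then 1 else 0

lemma ind_apply (S : Finset (Fin n)) (l : Fin n) : ind S l = if l ∈ S then 1 else 0 := rfl

lemma ind_le_iff (S : Finset (Fin n)) (b : Fin n →₀ ℕ) : ind S ≤ b ↔ ∀ l ∈ S, 1 ≤ b l := by
  constructor
  · intro h l hl
    simpa [ind_apply, hl] using h l
  · intro h l
    rw [ind_apply]
    split_ifs with hl
    · exact h l hl
    · exact Nat.zero_le _

lemma ind_le_ind (S W : Finset (Fin n)) : ind S ≤ ind W ↔ S ⊆ W := by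
  rw [ind_le_iff]
  refine forall₂_congr fun l _ => ?_
  rw [ind_apply]; split_ifs with h <;> simp [h]

lemma support_ind_sub (S W : Finset (Fin n)) : (ind W - ind S).support = W \ S := by
  ext l
  simp only [Finsupp.mem_support_iff, Finsupp.tsub_apply, ind_apply, Finset.mem_sdiff]
  split_ifs <;> simp [*]

lemma degree_ind (S : Finset (Fin n)) : (ind S).degree = S.card := by
  rw [Finsupp.degree_eq_sum]
  simp [ind_apply]

/-- The component of multidegree `b` of a Koszul chain with polynomial coefficients. -/
noncomputable def mcomp (b : Fin n →₀ ℕ) (f : Finset (Fin n) → MvPolynomial (Fin n) K) : Finset (Fin n) → K :=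
  fun S => if ind S ≤ b then coeff (b - ind S) (f S) else 0

/-- The Koszul chain that is concentrated in multidegree `b` with coefficients `g`. -/
noncomputable def mincl (b : Fin n →₀ ℕ) (g : Finset (Fin n) → K) : Finset (Fin n) → MvPolynomial (Fin n) K :=
  fun S => if ind S ≤ b then monomial (b - ind S) (g S) else 0

lemma coeff_eq_mcomp (f : Finset (Fin n) → MvPolynomial (Fin n) K) (S : Finset (Fin n)) (a : Fin n →₀ ℕ) :
    coeff a (f S) = mcomp (a + ind S) f S := by
  simp [mcomp]

lemma mcomp_sub (b : Fin n →₀ ℕ) (f g : Finset (Fin n) → MvPolynomial (Fin n) K) : mcomp b (f - g) = mcomp b f - mcomp b g := by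
  funext S; by_cases h : ind S ≤ b <;> simp [mcomp, h]

lemma mcomp_sum {ι : Type*} (s : Finset ι) (b : Fin n →₀ ℕ) (f : ι → Finset (Fin n) → MvPolynomial (Fin n) K) :
    mcomp b (∑ i ∈ s, f i) = ∑ i ∈ s, mcomp b (f i) := by
  funext S; by_cases h : ind S ≤ b <;> simp [mcomp, h, coeff_sum]

lemma mcomp_mincl (b : Fin n →₀ ℕ) (g : Finset (Fin n) → K) (hg : ∀ S, g S ≠ 0 → ind S ≤ b) :
    mcomp b (mincl b g) = g := by
  funext S
  by_cases h : ind S ≤ b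
  · simp [mcomp, mincl, h]
  · have : g S = 0 := not_not.mp fun h' => h (hg S h')
    simp [mcomp, h, this]

lemma mcomp_mincl_of_ne {b c : Fin n →₀ ℕ} (hbc : b ≠ c) (g : Finset (Fin n) → K) :
    mcomp c (mincl b g) = 0 := by
  funext S
  by_cases h : ind S ≤ b
  · by_cases h' : ind S ≤ c
    · simp only [mcomp, mincl, h, h', if_true, coeff_monomial, Pi.zero_apply]
      rw [if_neg]
      intro h2
      apply hbc
      rw [← tsub_add_cancel_of_le h, ← tsub_add_cancel_of_le h', h2]
    · simp [mcomp, h']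
  · simp [mcomp, mincl, h]

/-- In each multidegree the Koszul differential becomes the simplicial boundary operator. -/
lemma mcomp_kd (b : Fin n →₀ ℕ) (f : Finset (Fin n) → MvPolynomial (Fin n) K) :
    mcomp b (kd (X : Fin n → MvPolynomial (Fin n) K) f) = kd (1 : Fin n → K) (mcomp b f) := by
  funext T
  rw [kd_apply]
  by_cases hT : ind T ≤ b
  · rw [mcomp, if_pos hT, kd_apply, coeff_sum]
    refine Finset.sum_congr rfl fun l _ => ?_
    rw [contr_apply, contr_apply]
    by_cases hl : l ∈ T
    · simp [hl]
    · rw [if_neg hl, if_neg hl, smul_comm, coeff_smul, Pi.one_apply, one_smul, smul_eq_mul,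
        coeff_X_mul', mcomp]
      congr 1
      have e : l ∈ (b - ind T).support ↔ ind (insert l T) ≤ b := by
        simp only [Finsupp.mem_support_iff, Finsupp.tsub_apply, ind_apply, hl, if_false]
        rw [ind_le_iff, Finset.forall_mem_insert, ← ind_le_iff]
        simp only [hT, and_true]; omega
      by_cases h : ind (insert l T) ≤ b
      · rw [if_pos h, if_pos (e.mpr h), tsub_tsub]
        congr 3
        ext k
        simp only [Finsupp.add_apply, ind_apply, Finsupp.single_apply, Finset.mem_insert]
        by_cases hk : l = k
        · subst hk; simp [hl]
        · simp [hk, Ne.symm hk]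
      · rw [if_neg h, if_neg (fun h' => h (e.mp h'))]
  · rw [mcomp, if_neg hT]
    symm
    refine Finset.sum_eq_zero fun l _ => ?_
    have h0 : ¬ ind (insert l T) ≤ b := by
      intro h
      rw [ind_le_iff] at h hT
      exact hT fun k hk => h k (Finset.mem_insert_of_mem hk)
    rw [contr_apply, mcomp, if_neg h0]
    simp

/-- Chains of homological degree `i` whose multidegrees lie in `D` and whose coefficients involve
only monomials with support in `P`. -/
def PChain (P : Set (Finset (Fin n))) (D : Set (Fin n →₀ ℕ)) (i : ℕ) (f : Finset (Fin n) → MvPolynomial (Fin n) K) : Prop :=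
  ∀ S a, coeff a (f S) ≠ 0 → S.card = i ∧ a.support ∈ P ∧ a + ind S ∈ D

/-- All coefficients of the chain involve only monomials with support in `Q`. -/
def InMon (Q : Set (Finset (Fin n))) (f : Finset (Fin n) → MvPolynomial (Fin n) K) : Prop :=
  ∀ S a, coeff a (f S) ≠ 0 → a.support ∈ Q

/-- Vanishing of the degree-`i` Koszul homology, in multidegrees from `D`, of the subquotient of
the polynomial ring spanned by the monomials with support in `P` modulo those with support
in `Q`. -/
def PExact (K : Type*) [Field K] (P Q : Set (Finset (Fin n))) (D : Set (Fin n →₀ ℕ)) (i : ℕ) :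
    Prop :=
  ∀ f : Finset (Fin n) → MvPolynomial (Fin n) K, PChain P D i f → InMon Q (kd (X : Fin n → MvPolynomial (Fin n) K) f) →
    ∃ u : Finset (Fin n) → MvPolynomial (Fin n) K, PChain P D (i + 1) u ∧
      InMon Q (f - kd (X : Fin n → MvPolynomial (Fin n) K) u)

/-- The scalar chains arising as components of multidegree `b` of elements of `PChain`. -/
def MChain (P : Set (Finset (Fin n))) (b : Fin n →₀ ℕ) (i : ℕ) (g : Finset (Fin n) → K) : Prop :=
  ∀ S, g S ≠ 0 → S.card = i ∧ ind S ≤ b ∧ (b - ind S).support ∈ P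

/-- The part of `PExact` in the single multidegree `b`. -/
def MExact (K : Type*) [Field K] (P Q : Set (Finset (Fin n))) (b : Fin n →₀ ℕ) (i : ℕ) : Prop :=
  ∀ g : Finset (Fin n) → K, MChain P b i g →
    (∀ T, kd (1 : Fin n → K) g T ≠ 0 → (b - ind T).support ∈ Q) →
    ∃ u : Finset (Fin n) → K, MChain P b (i + 1) u ∧
      ∀ T, (g - kd (1 : Fin n → K) u) T ≠ 0 → (b - ind T).support ∈ Q

variable {P Q : Set (Finset (Fin n))} {D : Set (Fin n →₀ ℕ)} {i : ℕ}

lemma pchain_iff (f : Finset (Fin n) → MvPolynomial (Fin n) K) :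
    PChain P D i f ↔ ∀ b, MChain P b i (mcomp b f) ∧ (mcomp b f ≠ 0 → b ∈ D) := by
  constructor
  · intro h b
    have key : ∀ S, mcomp b f S ≠ 0 →
        (S.card = i ∧ ind S ≤ b ∧ (b - ind S).support ∈ P) ∧ b ∈ D := by
      intro S hS
      unfold mcomp at hS
      split_ifs at hS with hle
      · obtain ⟨h1, h2, h3⟩ := h S _ hS
        rw [tsub_add_cancel_of_le hle] at h3
        exact ⟨⟨h1, hle, h2⟩, h3⟩
      · exact absurd rfl hS
    refine ⟨fun S hS => (key S hS).1, fun hne => ?_⟩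
    obtain ⟨S, hS⟩ := Function.ne_iff.mp hne
    exact (key S hS).2
  · intro h S a ha
    rw [coeff_eq_mcomp] at ha
    obtain ⟨h1, -, h3⟩ := (h _).1 S ha
    rw [add_tsub_cancel_right] at h3
    exact ⟨h1, h3, (h _).2 fun h0 => ha (by rw [h0]; rfl)⟩

lemma inMon_iff (f : Finset (Fin n) → MvPolynomial (Fin n) K) :
    InMon Q f ↔ ∀ b S, mcomp b f S ≠ 0 → (b - ind S).support ∈ Q := by
  constructor
  · intro h b S hS
    unfold mcomp at hS
    split_ifs at hS with hle
    · exact h S _ hS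
    · exact absurd rfl hS
  · intro h S a ha
    rw [coeff_eq_mcomp] at ha
    simpa using h _ S ha

lemma pexact_iff_mexact : PExact K P Q D i ↔ ∀ b ∈ D, MExact K P Q b i := by
  classical
  constructor
  · intro h b hb g hg hcyc
    have hgle : ∀ S, g S ≠ 0 → ind S ≤ b := fun S hS => (hg S hS).2.1
    obtain ⟨u, hu, hu'⟩ := h (mincl b g) (by
      rw [pchain_iff]
      intro c
      by_cases hc : b = c
      · subst hc; rw [mcomp_mincl b g hgle]; exact ⟨hg, fun _ => hb⟩
      · rw [mcomp_mincl_of_ne hc]; exact ⟨fun S hS => absurd rfl hS, fun h => absurd rfl h⟩) (by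
      rw [inMon_iff]
      intro c S
      rw [mcomp_kd]
      by_cases hc : b = c
      · subst hc; rw [mcomp_mincl b g hgle]; exact hcyc S
      · rw [mcomp_mincl_of_ne hc, map_zero]; exact fun h => absurd rfl h)
    refine ⟨mcomp b u, ((pchain_iff u).mp hu b).1, fun T hT => (inMon_iff _).mp hu' b T ?_⟩
    rwa [mcomp_sub, mcomp_kd, mcomp_mincl b g hgle]
  · intro h f hf hcyc
    have hf' := (pchain_iff f).mp hf
    have key : ∀ b, ∃ v : Finset (Fin n) → K, MChain P b (i + 1) v ∧ (v ≠ 0 → b ∈ D) ∧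
        (mcomp b f = 0 → v = 0) ∧
        ∀ T, (mcomp b f - kd (1 : Fin n → K) v) T ≠ 0 → (b - ind T).support ∈ Q := by
      intro b
      by_cases h0 : mcomp b f = 0
      · refine ⟨0, fun S hS => absurd rfl hS, fun h => absurd rfl h, fun _ => rfl, ?_⟩
        rw [h0, map_zero, sub_zero]
        exact fun T hT => absurd rfl hT
      · obtain ⟨v, hv, hv'⟩ := h b ((hf' b).2 h0) (mcomp b f) (hf' b).1 (by
          rw [← mcomp_kd]; exact (inMon_iff _).mp hcyc b)
        exact ⟨v, hv, fun _ => (hf' b).2 h0, fun h => absurd h h0, hv'⟩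
    choose v hv hvD hv0 hv' using key
    set F : Finset (Fin n →₀ ℕ) :=
      Finset.univ.biUnion fun S => (f S).support.image fun a => a + ind S with hF
    have hFmem : ∀ b, b ∉ F → mcomp b f = 0 := by
      intro b hb
      funext S
      by_contra hS
      apply hb
      have hS' : mcomp b f S ≠ 0 := hS
      unfold mcomp at hS'
      split_ifs at hS' with hle
      · simp only [hF, Finset.mem_biUnion, Finset.mem_univ, true_and, Finset.mem_image,
          mem_support_iff]
        exact ⟨S, _, hS', tsub_add_cancel_of_le hle⟩
      · exact absurd rfl hS'
    have hcomp : ∀ b, mcomp b (∑ c ∈ F, mincl c (v c)) = v b := by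
      intro b
      rw [mcomp_sum]
      by_cases hb : b ∈ F
      · rw [Finset.sum_eq_single_of_mem b hb fun c _ hcb => mcomp_mincl_of_ne hcb _,
          mcomp_mincl b _ fun S hS => (hv b S hS).2.1]
      · rw [hv0 b (hFmem b hb)]
        exact Finset.sum_eq_zero fun c hc =>
          mcomp_mincl_of_ne (fun h : c = b => hb (h ▸ hc)) _
    refine ⟨∑ c ∈ F, mincl c (v c), ?_, ?_⟩
    · rw [pchain_iff]
      intro b
      rw [hcomp]
      exact ⟨hv b, hvD b⟩
    · rw [inMon_iff]
      intro b S
      rw [mcomp_sub, mcomp_kd, hcomp]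
      exact hv' b S

/-- Multidegrees that are not squarefree contribute no homology: if `b_l ≥ 2`, exterior
multiplication by `e_l` is a contracting homotopy. -/
lemma mexact_of_two_le {b : Fin n →₀ ℕ} {l : Fin n} (hl : 2 ≤ b l) : MExact K P Q b i := by
  intro g hg hcyc
  have hsupp : ∀ S, l ∈ S → (b - ind S).support = (b - ind (S.erase l)).support := by
    intro S hS
    ext k
    simp only [Finsupp.mem_support_iff, Finsupp.tsub_apply, ind_apply, Finset.mem_erase]
    by_cases hk : k = l
    · subst hk; simp [hS]; omega
    · simp [hk]
  refine ⟨wedge K l g, ?_, ?_⟩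
  · intro S hS
    rw [wedge_apply] at hS
    split_ifs at hS with h
    · obtain ⟨h1, h2, h3⟩ := hg (S.erase l) fun h' => hS (by simp [h'])
      refine ⟨by rw [← h1, Finset.card_erase_add_one h], ?_, hsupp S h ▸ h3⟩
      rw [ind_le_iff] at h2 ⊢
      intro k hk
      by_cases hkl : k = l
      · subst hkl; omega
      · exact h2 k (Finset.mem_erase.mpr ⟨hkl, hk⟩)
    · exact absurd rfl hS
  · have e : g - kd (1 : Fin n → K) (wedge K l g) = wedge K l (kd (1 : Fin n → K) g) := by
      have := kd_wedge (1 : Fin n → K) l g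
      rw [Pi.one_apply, one_smul] at this
      rw [sub_eq_iff_eq_add, add_comm, this]
    intro T hT
    rw [e, wedge_apply] at hT
    split_ifs at hT with h
    · rw [hsupp T h]
      exact hcyc _ fun h' => hT (by simp [h'])
    · exact absurd rfl hT

lemma pexact_iff_squarefree :
    PExact K P Q D i ↔ ∀ W : Finset (Fin n), ind W ∈ D → MExact K P Q (ind W) i := by
  rw [pexact_iff_mexact]
  refine ⟨fun h W hW => h _ hW, fun h b hb => ?_⟩
  by_cases h2 : ∃ l, 2 ≤ b l
  · obtain ⟨l, hl⟩ := h2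
    exact mexact_of_two_le hl
  · push Not at h2
    have : b = ind b.support := by
      ext l
      have := h2 l
      rw [ind_apply]
      split_ifs with h
      · rw [Finsupp.mem_support_iff] at h; omega
      · simpa using h
    rw [this] at hb ⊢
    exact h _ hb

end Multigraded
/-! ### Homology of links versus homology of restrictions -/

section Links

variable {n : ℕ} {K : Type*} [Field K]

/-- Scalar chains of degree `i` supported on subsets of `B`. -/
def simpChains (K : Type*) [Field K] (B : Finset (Fin n)) (i : ℕ) :
    Submodule K (Finset (Fin n) → K) where
  carrier := {g | ∀ S, g S ≠ 0 → S ⊆ B ∧ S.card = i}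
  zero_mem' S hS := absurd rfl hS
  add_mem' {a b} ha hb S hS := by
    by_cases h : a S = 0
    · exact hb S fun h' => hS (by simp [h, h'])
    · exact ha S h
  smul_mem' c a ha S hS := ha S fun h => hS (by simp [h])

lemma contr_mem_sub {B : Finset (Fin n)} {i : ℕ} {v : Fin n}
    {u : Finset (Fin n) → K} (hu : u ∈ simpChains K (insert v B) (i + 1)) :
    contr K v u ∈ simpChains K B i := by
  intro S hS
  rw [contr_apply] at hS
  split_ifs at hS with h
  · exact absurd rfl hS
  · obtain ⟨h1, h2⟩ := hu (insert v S) fun h' => hS (by simp [h'])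
    rw [Finset.card_insert_of_notMem h] at h2
    exact ⟨(Finset.insert_subset_insert_iff h).mp h1, by omega⟩

lemma wedge_mem_sub {B : Finset (Fin n)} {i : ℕ} (v : Fin n)
    {u : Finset (Fin n) → K} (hu : u ∈ simpChains K B i) :
    wedge K v u ∈ simpChains K (insert v B) (i + 1) := by
  intro S hS
  rw [wedge_apply] at hS
  split_ifs at hS with h
  · obtain ⟨h1, h2⟩ := hu (S.erase v) fun h' => hS (by simp [h'])
    exact ⟨Finset.subset_insert_iff.mpr h1, by rw [← h2, Finset.card_erase_add_one h]⟩
  · exact absurd rfl hS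

lemma kd_mem_sub {B : Finset (Fin n)} {i : ℕ}
    {u : Finset (Fin n) → K} (hu : u ∈ simpChains K B (i + 1)) :
    kd (1 : Fin n → K) u ∈ simpChains K B i := by
  rw [kd_eq]
  refine Submodule.sum_mem _ fun l _ => Submodule.smul_mem _ _ ?_
  intro S hS
  rw [contr_apply] at hS
  split_ifs at hS with h
  · exact absurd rfl hS
  · obtain ⟨h1, h2⟩ := hu (insert l S) fun h' => hS (by simp [h'])
    rw [Finset.card_insert_of_notMem h] at h2
    exact ⟨(Finset.subset_insert _ _).trans h1, by omega⟩

lemma sub_mono {B B' : Finset (Fin n)} (h : B ⊆ B') (i : ℕ) : simpChains K B i ≤ simpChains K B' i :=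
  fun _ hg S hS => ⟨(hg S hS).1.trans h, (hg S hS).2⟩

lemma apply_eq_zero_of_mem_sub {B : Finset (Fin n)} {i : ℕ} {u : Finset (Fin n) → K}
    (hu : u ∈ simpChains K B i) {v : Fin n} (hv : v ∉ B) {S : Finset (Fin n)} (hS : v ∈ S) : u S = 0 :=
  not_not.mp fun h => hv ((hu S h).1 hS)

lemma contr_eq_zero_of_mem_sub {B : Finset (Fin n)} {i : ℕ} {u : Finset (Fin n) → K}
    (hu : u ∈ simpChains K B i) {v : Fin n} (hv : v ∉ B) : contr K v u = 0 := by
  funext S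
  rw [contr_apply, apply_eq_zero_of_mem_sub hu hv (Finset.mem_insert_self v S)]
  simp

lemma kd_apply_eq_zero_of_mem_sub {B : Finset (Fin n)} {i : ℕ} {u : Finset (Fin n) → K}
    (hu : u ∈ simpChains K B i) {S : Finset (Fin n)} (hS : ¬ S ⊆ B) :
    kd (1 : Fin n → K) u S = 0 := by
  rw [kd_apply]
  refine Finset.sum_eq_zero fun l _ => ?_
  rw [contr_apply]
  have : u (insert l S) = 0 :=
    not_not.mp fun h => hS ((Finset.subset_insert _ _).trans (hu _ h).1)
  simp [this]

/-- Vanishing of the degree-`i` homology of the pair (full simplex on `B`, link of `A` restricted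
to `B`), where `E` is the set of nonfaces: chains are taken modulo the sets `T` with
`A ∪ T ∉ E`. -/
def LExact (K : Type*) [Field K] (E : Set (Finset (Fin n))) (A B : Finset (Fin n)) (i : ℕ) :
    Prop :=
  ∀ g ∈ simpChains K B i, (∀ T, T ⊆ B → A ∪ T ∈ E → kd (1 : Fin n → K) g T = 0) →
    ∃ u ∈ simpChains K B (i + 1), ∀ T, T ⊆ B → A ∪ T ∈ E → g T = kd (1 : Fin n → K) u T

variable {E : Set (Finset (Fin n))}

/-- Part of the long exact sequence of restriction to `B`, restriction to `B ∪ {v}` and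
link of `v`. -/
lemma LExact.restrict (hE : IsUpperSet E) {A B : Finset (Fin n)} {v : Fin n} (hv : v ∉ B) {i : ℕ}
    (h1 : LExact K E (insert v A) B i) (h2 : LExact K E A (insert v B) i) :
    LExact K E A B i := by
  intro g hg hcyc
  obtain ⟨u, hu, hgu⟩ := h2 g (sub_mono (Finset.subset_insert _ _) i hg) (by
    intro T _ hTE
    by_cases hTB : T ⊆ B
    · exact hcyc T hTB hTE
    · exact kd_apply_eq_zero_of_mem_sub hg hTB)
  have hw := contr_mem_sub hu
  obtain ⟨z, hz, hwz⟩ := h1 _ hw (by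
    intro T hT hTE
    have hvT : v ∉ T := fun h => hv (hT h)
    have h3 := congrFun (contr_kd (1 : Fin n → K) v u) T
    rw [contr_apply, if_neg hvT, ← hgu _ (Finset.insert_subset_insert v hT) (by
      rwa [Finset.union_insert, ← Finset.insert_union]),
      apply_eq_zero_of_mem_sub hg hv (Finset.mem_insert_self v T), smul_zero] at h3
    simpa using h3.symm)
  -- Correct `u` by a boundary so that its part containing `v` becomes trivial.
  set u' := u + kd (1 : Fin n → K) (wedge K v z) with hu'
  have hu'mem : u' ∈ simpChains K (insert v B) (i + 1) :=
    Submodule.add_mem _ hu (kd_mem_sub (wedge_mem_sub v hz))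
  have hcu' : contr K v u' = contr K v u - kd (1 : Fin n → K) z := by
    have h3 := contr_wedge_self (R := K) v z
    rw [contr_eq_zero_of_mem_sub hz hv, map_zero, add_zero] at h3
    rw [hu', map_add, contr_kd, h3, sub_eq_add_neg]
  have hdu' : kd (1 : Fin n → K) u' = kd (1 : Fin n → K) u := by
    rw [hu', map_add, kd_kd, add_zero]
  refine ⟨fun S => if v ∈ S then 0 else u' S, ?_, ?_⟩
  · intro S hS
    simp only [ne_eq, ite_eq_left_iff, not_forall] at hS
    obtain ⟨hvS, hS⟩ := hS
    obtain ⟨h3, h4⟩ := hu'mem S hS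
    exact ⟨(Finset.subset_insert_iff_of_notMem hvS).mp h3, h4⟩
  · intro T hT hTE
    have hvT : v ∉ T := fun h => hv (hT h)
    rw [hgu T (hT.trans (Finset.subset_insert _ _)) hTE, ← hdu', kd_apply, kd_apply]
    refine Finset.sum_congr rfl fun l _ => ?_
    by_cases hlv : l = v
    · subst hlv
      rw [hcu', Pi.sub_apply, hwz T hT (hE (by
        rw [Finset.insert_union]; exact Finset.subset_insert _ _) hTE), sub_self]
      simp [contr_apply]
    · rw [contr_apply, contr_apply]
      simp [hvT, Ne.symm hlv]

/-- The other relevant part of the same long exact sequence. -/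
lemma LExact.link (hE : IsUpperSet E) {A B : Finset (Fin n)} {v : Fin n} (hv : v ∉ B) {i : ℕ}
    (h1 : LExact K E A B i) (h2 : LExact K E A (insert v B) (i + 1)) :
    LExact K E (insert v A) B i := by
  intro g hg hcyc
  have hup : ∀ T, A ∪ T ∈ E → insert v A ∪ T ∈ E := fun T hT =>
    hE (by rw [Finset.insert_union]; exact Finset.subset_insert _ _) hT
  obtain ⟨y, hy, hgy⟩ := h1 g hg fun T hT hTE => hcyc T hT (hup T hTE)
  have hwg : kd (1 : Fin n → K) (wedge K v g) = g - wedge K v (kd (1 : Fin n → K) g) := by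
    have := kd_wedge (1 : Fin n → K) v g
    rw [Pi.one_apply, one_smul] at this
    exact eq_sub_of_add_eq this
  obtain ⟨t, ht, hgt⟩ := h2 (wedge K v g - y)
    (Submodule.sub_mem _ (wedge_mem_sub v hg) (sub_mono (Finset.subset_insert _ _) _ hy)) (by
      intro T hT hTE
      rw [map_sub, hwg, Pi.sub_apply, Pi.sub_apply, wedge_apply]
      by_cases hvT : v ∈ T
      · rw [if_pos hvT, apply_eq_zero_of_mem_sub hg hv hvT,
          apply_eq_zero_of_mem_sub (kd_mem_sub hy) hv hvT, hcyc (T.erase v)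
            (Finset.subset_insert_iff.mp hT) (by
              rwa [Finset.insert_union, ← Finset.union_insert, Finset.insert_erase hvT])]
        simp
      · have hTB : T ⊆ B := (Finset.subset_insert_iff_of_notMem hvT).mp hT
        rw [if_neg hvT, hgy T hTB hTE]
        simp)
  refine ⟨-contr K v t, Submodule.neg_mem _ (contr_mem_sub ht), ?_⟩
  intro T hT hTE
  have hvT : v ∉ T := fun h => hv (hT h)
  have h3 := contr_wedge_self (R := K) v g
  rw [contr_eq_zero_of_mem_sub hg hv, map_zero, add_zero] at h3
  have h4 : contr K v (wedge K v g - y) T = contr K v (kd (1 : Fin n → K) t) T := by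
    rw [contr_apply, contr_apply, hgt (insert v T) (Finset.insert_subset_insert v hT) (by
      rwa [Finset.union_insert, ← Finset.insert_union])]
  rw [map_sub, h3, contr_eq_zero_of_mem_sub hy hv, sub_zero, contr_kd] at h4
  rw [h4, map_neg]

/-- The homology of all links vanishes above a given degree if and only if the homology of all
restrictions does. -/
lemma links_iff_restrictions (hE : IsUpperSet E) (r : ℕ) :
    (∀ i, r ≤ i → ∀ W, LExact K E Wᶜ W i) ↔ ∀ i, r ≤ i → ∀ W, LExact K E ∅ W i := by
  constructor
  · intro h i hi W
    have key : ∀ C A B : Finset (Fin n), (∀ l, l ∈ C ↔ l ∉ A ∧ l ∉ B) →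
        Disjoint A B → LExact K E A B i := by
      intro C
      induction C using Finset.induction_on with
      | empty =>
        intro A B hC hAB
        have : A = Bᶜ := by
          ext l
          have h1 := hC l
          have h2 : l ∈ A → l ∉ B := fun h' => Finset.disjoint_left.mp hAB h'
          simp only [Finset.notMem_empty, false_iff] at h1
          rw [Finset.mem_compl]
          tauto
        rw [this]
        exact h i hi B
      | insert v C hvC ih =>
        intro A B hC hAB
        have hv := (hC v).1 (Finset.mem_insert_self _ _)
        refine LExact.restrict hE hv.2 (ih _ _ ?_ ?_) (ih _ _ ?_ ?_)
        · intro l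
          have := hC l
          by_cases hl : l = v
          · subst hl; simp [hvC]
          · simpa [hl] using this
        · simp [hv.2, hAB]
        · intro l
          have := hC l
          by_cases hl : l = v
          · subst hl; simp [hvC]
          · simpa [hl] using this
        · simp [hv.1, hAB]
    exact key Wᶜ ∅ W (by simp) (by simp)
  · intro h i hi W
    have key : ∀ A : Finset (Fin n), ∀ B i, r ≤ i → Disjoint A B → LExact K E A B i := by
      intro A
      induction A using Finset.induction_on with
      | empty => exact fun B i hi _ => h i hi B
      | insert v A hvA ih =>
        intro B i hi hAB
        rw [Finset.disjoint_insert_left] at hAB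
        exact LExact.link hE hAB.1 (ih _ _ hi hAB.2)
          (ih _ _ (by omega) (by simp [hvA, hAB.2]))
    exact key _ _ i hi disjoint_compl_left

end Links
/-! ### Alexander duality -/

section Duality

variable {n : ℕ} {K : Type*} [Field K]

/-- Exactness at the coordinate subspace of vectors supported on `B` passes to adjoints. -/
lemma exact_dual {ι : Type*} [Fintype ι] [DecidableEq ι] {M₁ M₂ N₁ N₂ : (ι → K) →ₗ[K] (ι → K)}
    (h₁ : ∀ f g, M₁ f ⬝ᵥ g = f ⬝ᵥ N₁ g) (h₂ : ∀ f g, M₂ f ⬝ᵥ g = f ⬝ᵥ N₂ g) (B : Set ι)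
    (hex : ∀ v, (∀ s, v s ≠ 0 → s ∈ B) → M₂ v = 0 → ∃ w, ∀ s ∈ B, M₁ w s = v s)
    (φ : ι → K) (hφ : ∀ s, φ s ≠ 0 → s ∈ B) (hφ' : N₁ φ = 0) :
    ∃ ψ, ∀ s ∈ B, N₂ ψ s = φ s := by
  let V : Submodule K (ι → K) :=
    { carrier := {v | ∀ s, v s ≠ 0 → s ∈ B}
      zero_mem' := fun s hs => absurd rfl hs
      add_mem' := fun {a b} ha hb s hs => by
        by_cases h : a s = 0
        · exact hb s fun h' => hs (by simp [h, h'])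
        · exact ha s h
      smul_mem' := fun c a ha s hs => ha s fun h => hs (by simp [h]) }
  let N : V →ₗ[K] (ι → K) := M₂.comp V.subtype
  let Φ : Module.Dual K V := (dotProductBilin K K φ).comp V.subtype
  have hΦ : Φ ∈ LinearMap.range N.dualMap := by
    rw [LinearMap.range_dualMap_eq_dualAnnihilator_ker, Submodule.mem_dualAnnihilator]
    rintro ⟨v, hv⟩ hker
    obtain ⟨w, hw⟩ := hex v hv hker
    change φ ⬝ᵥ v = 0
    have : φ ⬝ᵥ v = φ ⬝ᵥ M₁ w := by
      refine Finset.sum_congr rfl fun s _ => ?_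
      by_cases hs : s ∈ B
      · rw [hw s hs]
      · rw [not_not.mp fun h => hs (hφ s h), zero_mul, zero_mul]
    rw [this, dotProduct_comm, h₁, hφ', dotProduct_zero]
  obtain ⟨Ψ, hΨ⟩ := hΦ
  refine ⟨fun s => Ψ (Pi.single s 1), fun s hs => ?_⟩
  have hsV : (Pi.single s 1 : ι → K) ∈ V := by
    intro s' hs'
    by_cases h : s' = s
    · rwa [h]
    · exact absurd (by simp [h]) hs'
  have h3 := LinearMap.congr_fun hΨ ⟨_, hsV⟩
  have h4 : Ψ (M₂ (Pi.single s 1)) = φ s := by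
    have : Φ ⟨_, hsV⟩ = φ ⬝ᵥ Pi.single s 1 := rfl
    rw [dotProduct_single_one] at this
    rw [← this, ← h3]; rfl
  rw [← h4, LinearMap.pi_apply_eq_sum_univ Ψ]
  have h5 := h₂ (Pi.single s 1) fun s => Ψ (Pi.single s 1)
  rw [single_one_dotProduct] at h5
  rw [← h5]
  refine Finset.sum_congr rfl fun i _ => ?_
  rw [smul_eq_mul]
  congr 1
  change Ψ _ = Ψ _
  congr 1
  funext j
  simp [Pi.single_apply, eq_comm]

/-- Simplicial coboundary operator, the transpose of the boundary operator `kd 1`. -/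
def cobd (K : Type*) [Field K] : (Finset (Fin n) → K) →ₗ[K] (Finset (Fin n) → K) :=
  ∑ l, wedge K l

lemma cobd_apply (f : Finset (Fin n) → K) (T : Finset (Fin n)) :
    cobd K f T = ∑ l, wedge K l f T := by
  simp [cobd]

lemma contr_dotProduct (l : Fin n) (f g : Finset (Fin n) → K) :
    contr K l f ⬝ᵥ g = f ⬝ᵥ wedge K l g := by
  simp only [dotProduct, contr_apply, wedge_apply, ite_mul, mul_ite, zero_mul, mul_zero]
  rw [← Finset.sum_filter, Finset.sum_ite, Finset.sum_const_zero, zero_add]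
  refine Finset.sum_nbij' (insert l) (fun T => T.erase l) ?_ ?_ ?_ ?_ ?_
  · simp
  · simp
  · intro T hT
    exact Finset.erase_insert (by simpa using hT)
  · intro T hT
    exact Finset.insert_erase (by simpa using hT)
  · intro T hT
    have hl : l ∉ T := by simpa using hT
    rw [ksgn_insert_self, Finset.erase_insert hl]
    simp only [zsmul_eq_mul]
    ring

lemma kd_one_dotProduct (f g : Finset (Fin n) → K) :
    kd (1 : Fin n → K) f ⬝ᵥ g = f ⬝ᵥ cobd K g := by
  simp only [kd_eq, cobd, Pi.one_apply, one_smul, LinearMap.sum_apply, sum_dotProduct,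
    dotProduct_sum, contr_dotProduct]

open Classical in
/-- Coordinate projection onto the span of the `e_S` with `p S`. -/
noncomputable def proj (K : Type*) [Field K] (p : Finset (Fin n) → Prop) :
    (Finset (Fin n) → K) →ₗ[K] (Finset (Fin n) → K) where
  toFun f S := if p S then f S else 0
  map_add' f g := by funext S; by_cases h : p S <;> simp [h]
  map_smul' c f := by funext S; by_cases h : p S <;> simp [h]

lemma proj_of {p : Finset (Fin n) → Prop} {S : Finset (Fin n)} (h : p S)
    (f : Finset (Fin n) → K) : proj K p f S = f S := if_pos h

lemma proj_of_not {p : Finset (Fin n) → Prop} {S : Finset (Fin n)} (h : ¬ p S)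
    (f : Finset (Fin n) → K) : proj K p f S = 0 := if_neg h

lemma proj_dotProduct (p : Finset (Fin n) → Prop) (f g : Finset (Fin n) → K) :
    proj K p f ⬝ᵥ g = f ⬝ᵥ proj K p g := by
  refine Finset.sum_congr rfl fun S _ => ?_
  by_cases h : p S
  · rw [proj_of h, proj_of h]
  · rw [proj_of_not h, proj_of_not h, zero_mul, mul_zero]

lemma proj_eq_self {p : Finset (Fin n) → Prop} {f : Finset (Fin n) → K}
    (h : ∀ S, f S ≠ 0 → p S) : proj K p f = f := by
  funext S
  by_cases hS : p S
  · rw [proj_of hS]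
  · rw [proj_of_not hS, not_not.mp fun h' => hS (h S h')]

lemma wedge_congr {f g : Finset (Fin n) → K} {T : Finset (Fin n)}
    (h : ∀ l ∈ T, f (T.erase l) = g (T.erase l)) : cobd K f T = cobd K g T := by
  rw [cobd_apply, cobd_apply]
  refine Finset.sum_congr rfl fun l _ => ?_
  rw [wedge_apply, wedge_apply]
  split_ifs with hl
  · rw [h l hl]
  · rfl

lemma exists_of_cobd_ne_zero {f : Finset (Fin n) → K} {T : Finset (Fin n)} (h : cobd K f T ≠ 0) :
    ∃ l ∈ T, f (T.erase l) ≠ 0 := by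
  by_contra! hcon
  apply h
  have : cobd K f T = cobd K 0 T := wedge_congr fun l hl => by rw [hcon l hl]; rfl
  rw [this, map_zero]; rfl

/-- The sign by which the star operator acts on `e_T`. -/
def starSgn (W T : Finset (Fin n)) : ℤ := ∏ k ∈ T, ksgn k W

lemma starSgn_mul_self (W T : Finset (Fin n)) : starSgn W T * starSgn W T = 1 := by
  unfold starSgn
  rw [← Finset.prod_mul_distrib]
  exact Finset.prod_eq_one fun k _ => ksgn_mul_self k W

/-- Hodge star on chains of the simplex with vertex set `W`: up to sign, `e_{W \ T}` becomes
`e_T`. -/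
def hstar (W : Finset (Fin n)) (g : Finset (Fin n) → K) : Finset (Fin n) → K :=
  fun T => if T ⊆ W then starSgn W T • g (W \ T) else 0

/-- Inverse of `hstar`. -/
def hunstar (W : Finset (Fin n)) (g : Finset (Fin n) → K) : Finset (Fin n) → K :=
  fun S => if S ⊆ W then starSgn W (W \ S) • g (W \ S) else 0

lemma hstar_hunstar {W T : Finset (Fin n)} (hT : T ⊆ W) (g : Finset (Fin n) → K) :
    hstar W (hunstar W g) T = g T := by
  rw [hstar, if_pos hT, hunstar, if_pos Finset.sdiff_subset, Finset.sdiff_sdiff_eq_self hT,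
    smul_smul, starSgn_mul_self, one_smul]

lemma eq_of_hstar_eq {W S : Finset (Fin n)} (hS : S ⊆ W) {f g : Finset (Fin n) → K}
    (h : hstar W f (W \ S) = hstar W g (W \ S)) : f S = g S := by
  rw [hstar, hstar, if_pos Finset.sdiff_subset, if_pos Finset.sdiff_subset,
    Finset.sdiff_sdiff_eq_self hS] at h
  have := congrArg (fun y => starSgn W (W \ S) • y) h
  simpa only [smul_smul, starSgn_mul_self, one_smul] using this

lemma ksgn_sdiff_mul {W T : Finset (Fin n)} (hT : T ⊆ W) (l : Fin n) :
    ksgn l (W \ T) * ksgn l T = ksgn l W := by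
  unfold ksgn
  rw [← pow_add, ← Finset.card_union_of_disjoint, ← Finset.filter_union,
    Finset.sdiff_union_of_subset hT]
  exact Finset.disjoint_filter_filter Finset.sdiff_disjoint

/-- The star operator turns the boundary into the coboundary. -/
lemma hstar_kd {W : Finset (Fin n)} {g : Finset (Fin n) → K} (hg : ∀ S, g S ≠ 0 → S ⊆ W)
    {T : Finset (Fin n)} (hT : T ⊆ W) :
    hstar W (kd (1 : Fin n → K) g) T = cobd K (hstar W g) T := by
  rw [hstar, if_pos hT, kd_apply, cobd_apply, Finset.smul_sum]
  refine Finset.sum_congr rfl fun l _ => ?_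
  rw [Pi.one_apply, one_smul, contr_apply, wedge_apply]
  by_cases hl : l ∈ T
  · have hlW := hT hl
    rw [if_neg (by simp [hl]), if_pos hl, hstar, if_pos ((Finset.erase_subset _ _).trans hT),
      Finset.sdiff_erase hlW, smul_smul, smul_smul]
    congr 1
    have e1 : starSgn W T = ksgn l W * starSgn W (T.erase l) :=
      (Finset.mul_prod_erase T (fun k => ksgn k W) hl).symm
    rw [e1, ← ksgn_sdiff_mul hT l]
    linear_combination (ksgn l T * starSgn W (T.erase l)) * ksgn_mul_self l (W \ T)
  · rw [if_neg hl]
    by_cases hlW : l ∈ W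
    · simp [hl, hlW]
    · have : g (insert l (W \ T)) = 0 :=
        not_not.mp fun h => hlW (hg _ h (Finset.mem_insert_self _ _))
      simp [this]

variable {E : Set (Finset (Fin n))}

lemma lexact_iff_proj (hE : IsUpperSet E) (W : Finset (Fin n)) (t : ℕ) :
    LExact K E ∅ W t ↔ ∀ v : Finset (Fin n) → K,
      (∀ s, v s ≠ 0 → s ∈ {S | S ⊆ W ∧ S.card = t ∧ S ∈ E}) →
      (proj K (· ∈ E) ∘ₗ kd (1 : Fin n → K)) v = 0 →
      ∃ w, ∀ s ∈ {S | S ⊆ W ∧ S.card = t ∧ S ∈ E},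
        (kd (1 : Fin n → K) ∘ₗ proj K (fun S => S ⊆ W ∧ S.card = t + 1)) w s = v s := by
  unfold LExact
  simp only [Finset.empty_union]
  constructor
  · intro h v hv hcyc
    obtain ⟨u, hu, hu'⟩ := h v (fun S hS => ⟨(hv S hS).1, (hv S hS).2.1⟩) (by
      intro T _ hTE
      have := congrFun hcyc T
      rwa [LinearMap.comp_apply, proj_of hTE] at this)
    refine ⟨u, fun s hs => ?_⟩
    rw [LinearMap.comp_apply, proj_eq_self hu, hu' s hs.1 hs.2.2]
  · intro h g hg hcyc
    obtain ⟨w, hw⟩ := h (proj K (· ∈ E) g) (by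
      intro s hs
      by_cases hsE : s ∈ E
      · rw [proj_of hsE] at hs
        exact ⟨(hg s hs).1, (hg s hs).2, hsE⟩
      · exact absurd (proj_of_not hsE g) hs) (by
      funext T
      rw [LinearMap.comp_apply]
      by_cases hTE : T ∈ E
      · rw [proj_of hTE]
        have : kd (1 : Fin n → K) (proj K (· ∈ E) g) T = kd (1 : Fin n → K) g T := by
          rw [kd_apply, kd_apply]
          refine Finset.sum_congr rfl fun l _ => ?_
          rw [contr_apply, contr_apply, proj_of (hE (Finset.subset_insert l T) hTE)]
        rw [this]
        by_cases hTW : T ⊆ W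
        · exact hcyc T hTW hTE
        · exact kd_apply_eq_zero_of_mem_sub hg hTW
      · rw [proj_of_not hTE]; rfl)
    have hmem : proj K (fun S => S ⊆ W ∧ S.card = t + 1) w ∈ simpChains K W (t + 1) := by
      intro S hS
      by_contra hcon
      exact hS (proj_of_not hcon w)
    refine ⟨_, hmem, fun T hT hTE => ?_⟩
    by_cases hcard : T.card = t
    · have := hw T ⟨hT, hcard, hTE⟩
      rw [proj_of hTE] at this
      exact this.symm
    · rw [not_not.mp fun h' => hcard (hg T h').2,
        not_not.mp fun h' => hcard (kd_mem_sub hmem T h').2]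

lemma mchain_iff (W : Finset (Fin n)) (i : ℕ) (g : Finset (Fin n) → K) :
    MChain E (ind W) i g ↔ ∀ S, g S ≠ 0 → S.card = i ∧ S ⊆ W ∧ W \ S ∈ E := by
  unfold MChain
  simp only [ind_le_ind, support_ind_sub]

lemma cobd_exact_iff_mexact (hE : IsUpperSet E) {W : Finset (Fin n)} {t i : ℕ}
    (hit : i + t = W.card) :
    (∀ φ : Finset (Fin n) → K,
      (∀ s, φ s ≠ 0 → s ∈ {S | S ⊆ W ∧ S.card = t ∧ S ∈ E}) →
      (proj K (fun S => S ⊆ W ∧ S.card = t + 1) ∘ₗ cobd K) φ = 0 →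
      ∃ ψ, ∀ s ∈ {S | S ⊆ W ∧ S.card = t ∧ S ∈ E},
        (cobd K ∘ₗ proj K (· ∈ E)) ψ s = φ s) ↔ MExact K E ∅ (ind W) i := by
  unfold MExact
  simp only [Set.mem_empty_iff_false, imp_false, ne_eq, not_not, mchain_iff]
  constructor
  · intro h g hg hcyc
    have hgW : ∀ S, g S ≠ 0 → S ⊆ W := fun S hS => (hg S hS).2.1
    have hcyc' : kd (1 : Fin n → K) g = 0 := funext hcyc
    have hφ : ∀ s, hstar W g s ≠ 0 → s ∈ {S | S ⊆ W ∧ S.card = t ∧ S ∈ E} := by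
      intro T hT
      unfold hstar at hT
      split_ifs at hT with hTW
      · obtain ⟨h1, h2, h3⟩ := hg (W \ T) fun h' => hT (by simp [h'])
        rw [Finset.sdiff_sdiff_eq_self hTW] at h3
        rw [Finset.card_sdiff_of_subset hTW] at h1
        have := Finset.card_le_card hTW
        exact ⟨hTW, by omega, h3⟩
      · exact absurd rfl hT
    obtain ⟨ψ, hψ⟩ := h (hstar W g) hφ (by
      funext T
      rw [LinearMap.comp_apply]
      by_cases hT : T ⊆ W ∧ T.card = t + 1
      · rw [proj_of (p := fun S => S ⊆ W ∧ S.card = t + 1) hT, ← hstar_kd hgW hT.1, hcyc']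
        simp [hstar]
      · rw [proj_of_not (p := fun S => S ⊆ W ∧ S.card = t + 1) hT]; rfl)
    set p : Finset (Fin n) → Prop := fun S => S ⊆ W ∧ S.card + 1 = t ∧ S ∈ E with hp
    have hψ' : ∀ T, T ⊆ W → cobd K (proj K p ψ) T = hstar W g T := by
      intro T hTW
      by_cases hTB : T ∈ {S | S ⊆ W ∧ S.card = t ∧ S ∈ E}
      · rw [← hψ T hTB, LinearMap.comp_apply]
        refine wedge_congr fun l hl => ?_
        by_cases hlE : T.erase l ∈ E
        · rw [proj_of (p := (· ∈ E)) hlE, proj_of]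
          exact ⟨(Finset.erase_subset _ _).trans hTW,
            by rw [Finset.card_erase_add_one hl]; exact hTB.2.1, hlE⟩
        · rw [proj_of_not (p := (· ∈ E)) hlE, proj_of_not fun h' => hlE h'.2.2]
      · rw [not_not.mp fun h' => hTB (hφ T h')]
        by_contra hne
        obtain ⟨l, hl, hl'⟩ := exists_of_cobd_ne_zero hne
        have hpl : p (T.erase l) := by
          by_contra hcon
          exact hl' (proj_of_not hcon ψ)
        refine hTB ⟨hTW, ?_, hE (Finset.erase_subset l T) hpl.2.2⟩
        rw [← hpl.2.1, Finset.card_erase_add_one hl]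
    have hu : ∀ S, hunstar W (proj K p ψ) S ≠ 0 → S.card = i + 1 ∧ S ⊆ W ∧ W \ S ∈ E := by
      intro S hS
      unfold hunstar at hS
      split_ifs at hS with hSW
      · have hpl : p (W \ S) := by
          by_contra hcon
          exact hS (by rw [proj_of_not hcon ψ, smul_zero])
        have h1 := hpl.2.1
        rw [Finset.card_sdiff_of_subset hSW] at h1
        have := Finset.card_le_card hSW
        exact ⟨by omega, hSW, hpl.2.2⟩
      · exact absurd rfl hS
    refine ⟨hunstar W (proj K p ψ), hu, fun S => ?_⟩
    rw [Pi.sub_apply, sub_eq_zero]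
    by_cases hSW : S ⊆ W
    · refine eq_of_hstar_eq hSW ?_
      rw [hstar_kd (fun S hS => (hu S hS).2.1) Finset.sdiff_subset, ← hψ' _ Finset.sdiff_subset]
      refine wedge_congr fun l _ => ?_
      rw [hstar_hunstar ((Finset.erase_subset _ _).trans Finset.sdiff_subset)]
    · rw [not_not.mp fun h' => hSW (hgW S h'), kd_apply_eq_zero_of_mem_sub (B := W) (i := i + 1)
        (fun S hS => ⟨(hu S hS).2.1, (hu S hS).1⟩) hSW]
  · intro h φ hφ hcyc
    have hg : ∀ S, hunstar W φ S ≠ 0 → S.card = i ∧ S ⊆ W ∧ W \ S ∈ E := by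
      intro S hS
      unfold hunstar at hS
      split_ifs at hS with hSW
      · obtain ⟨-, h1, h2⟩ := hφ (W \ S) fun h' => hS (by simp [h'])
        rw [Finset.card_sdiff_of_subset hSW] at h1
        have := Finset.card_le_card hSW
        exact ⟨by omega, hSW, h2⟩
      · exact absurd rfl hS
    have hgW : ∀ S, hunstar W φ S ≠ 0 → S ⊆ W := fun S hS => (hg S hS).2.1
    obtain ⟨u, hu, hu'⟩ := h (hunstar W φ) hg (by
      intro S
      by_cases hSW : S ⊆ W
      · have h0 : cobd K φ (W \ S) = 0 := by
          by_contra hne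
          obtain ⟨l, hl, hl'⟩ := exists_of_cobd_ne_zero hne
          have hcard : (W \ S).card = t + 1 := by
            rw [← Finset.card_erase_add_one hl, (hφ _ hl').2.1]
          have := congrFun hcyc (W \ S)
          rw [LinearMap.comp_apply, proj_of ⟨Finset.sdiff_subset, hcard⟩] at this
          exact hne this
        have h1 : hstar W (kd (1 : Fin n → K) (hunstar W φ)) (W \ S) = hstar W 0 (W \ S) := by
          rw [hstar_kd hgW Finset.sdiff_subset]
          have : cobd K (hstar W (hunstar W φ)) (W \ S) = cobd K φ (W \ S) :=
            wedge_congr fun l _ =>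
              hstar_hunstar ((Finset.erase_subset _ _).trans Finset.sdiff_subset) φ
          rw [this, h0]
          simp [hstar]
        exact eq_of_hstar_eq hSW h1
      · exact kd_apply_eq_zero_of_mem_sub (B := W) (i := i)
          (fun S hS => ⟨(hg S hS).2.1, (hg S hS).1⟩) hSW)
    refine ⟨hstar W u, fun T hT => ?_⟩
    rw [LinearMap.comp_apply, proj_eq_self, ← hstar_kd (fun S hS => (hu S hS).2.1) hT.1]
    · have : kd (1 : Fin n → K) u = hunstar W φ :=
        (funext fun S => sub_eq_zero.mp (hu' S)).symm
      rw [this, hstar_hunstar hT.1]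
    · intro S hS
      unfold hstar at hS
      split_ifs at hS with hSW
      · have := (hu (W \ S) fun h' => hS (by simp [h'])).2.2
        rwa [Finset.sdiff_sdiff_eq_self hSW] at this
      · exact absurd rfl hS

/-- Hochster's formula in dual form: the multidegree-`W` part of `Tor_i` of the squarefree
monomial ideal of nonfaces is dual to the degree `|W| - i` relative homology of the restriction
to `W`. -/
lemma mexact_iff_lexact (hE : IsUpperSet E) {W : Finset (Fin n)} {t i : ℕ}
    (hit : i + t = W.card) : MExact K E ∅ (ind W) i ↔ LExact K E ∅ W t := by
  rw [lexact_iff_proj hE, ← cobd_exact_iff_mexact hE hit]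
  have a1 : ∀ f g, (kd (1 : Fin n → K) ∘ₗ proj K (fun S => S ⊆ W ∧ S.card = t + 1)) f ⬝ᵥ g =
      f ⬝ᵥ (proj K (fun S => S ⊆ W ∧ S.card = t + 1) ∘ₗ cobd K) g := fun f g => by
    rw [LinearMap.comp_apply, kd_one_dotProduct, proj_dotProduct, LinearMap.comp_apply]
  have a2 : ∀ f g, (proj K (· ∈ E) ∘ₗ kd (1 : Fin n → K)) f ⬝ᵥ g =
      f ⬝ᵥ (cobd K ∘ₗ proj K (· ∈ E)) g := fun f g => by
    rw [LinearMap.comp_apply, proj_dotProduct, kd_one_dotProduct, LinearMap.comp_apply]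
  constructor
  · intro h
    refine exact_dual (fun f g => ?_) (fun f g => ?_) _ h
    · rw [dotProduct_comm, ← a2, dotProduct_comm]
    · rw [dotProduct_comm, ← a1, dotProduct_comm]
  · intro h
    exact exact_dual a1 a2 _ h

end Duality

/-! ### Edge ideals and cover ideals -/

section Graph

variable {n : ℕ} {K : Type*} [Field K]

/-- The nonfaces of the independence complex: vertex sets containing an edge. -/
def nonfaces (G : SimpleGraph (Fin n)) : Set (Finset (Fin n)) :=
  {S | ∃ u v, G.Adj u v ∧ u ∈ S ∧ v ∈ S}

/-- The vertex covers of the graph, i.e. the complements of independent sets. -/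
def covers (G : SimpleGraph (Fin n)) : Set (Finset (Fin n)) :=
  {S | Sᶜ ∉ nonfaces G}

lemma isUpperSet_nonfaces (G : SimpleGraph (Fin n)) : IsUpperSet (nonfaces G) := by
  rintro S T hST ⟨u, v, h, hu, hv⟩
  exact ⟨u, v, h, hST hu, hST hv⟩

lemma mem_edgeIdeal (G : SimpleGraph (Fin n)) (f : MvPolynomial (Fin n) K) :
    f ∈ edgeIdeal K G ↔ ∀ a, coeff a f ≠ 0 → a.support ∈ nonfaces G := by
  have : edgeIdeal K G = Ideal.span ((fun s => monomial s (1 : K)) ''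
      {s | ∃ u v, G.Adj u v ∧ s = ind {u, v}}) := by
    unfold edgeIdeal
    congr 1
    ext p
    simp only [Set.mem_ofPred_eq, Set.mem_image]
    have key : ∀ u v, G.Adj u v →
        (X u * X v : MvPolynomial (Fin n) K) = monomial (ind {u, v}) 1 := by
      intro u v h
      rw [X, X, monomial_mul, one_mul]
      congr 2
      ext k
      have := h.ne
      simp only [Finsupp.add_apply, Finsupp.single_apply, ind_apply, Finset.mem_insert,
        Finset.mem_singleton]
      by_cases h1 : u = k
      · subst h1; simp [h.ne']
      · by_cases h2 : v = k
        · subst h2; simp [h.ne]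
        · simp [h1, h2, Ne.symm h1, Ne.symm h2]
    constructor
    · rintro ⟨u, v, h, rfl⟩
      exact ⟨_, ⟨u, v, h, rfl⟩, (key u v h).symm⟩
    · rintro ⟨_, ⟨u, v, h, rfl⟩, rfl⟩
      exact ⟨u, v, h, (key u v h).symm⟩
  rw [this, mem_ideal_span_monomial_image]
  refine forall_congr' fun a => ?_
  rw [mem_support_iff]
  refine imp_congr_right fun _ => ?_
  constructor
  · rintro ⟨_, ⟨u, v, h, rfl⟩, hle⟩
    rw [ind_le_iff] at hle
    refine ⟨u, v, h, ?_, ?_⟩ <;> rw [Finsupp.mem_support_iff, ← Nat.one_le_iff_ne_zero] <;>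
      exact hle _ (by simp)
  · rintro ⟨u, v, h, hu, hv⟩
    refine ⟨_, ⟨u, v, h, rfl⟩, ?_⟩
    rw [ind_le_iff]
    intro l hl
    rw [Nat.one_le_iff_ne_zero, ← Finsupp.mem_support_iff]
    rcases Finset.mem_insert.mp hl with rfl | hl
    · exact hu
    · rwa [Finset.mem_singleton.mp hl]

lemma mem_coverIdeal (G : SimpleGraph (Fin n)) (f : MvPolynomial (Fin n) K) :
    f ∈ coverIdeal K G ↔ ∀ a, coeff a f ≠ 0 → a.support ∈ covers G := by
  have key : ∀ u v, f ∈ (Ideal.span {X u, X v} : Ideal (MvPolynomial (Fin n) K)) ↔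
      ∀ a, coeff a f ≠ 0 → u ∈ a.support ∨ v ∈ a.support := by
    intro u v
    have h : ({X u, X v} : Set (MvPolynomial (Fin n) K)) = X '' {u, v} := by
      rw [Set.image_pair]
    rw [h, mem_ideal_span_X_image]
    refine forall_congr' fun a => ?_
    rw [mem_support_iff]
    simp
  simp only [coverIdeal, Submodule.mem_iInf, key, covers, nonfaces, Set.mem_ofPred_eq,
    Finset.mem_compl, not_exists, not_and, not_not]
  constructor
  · intro h a ha u v huv hu
    exact (h u v huv a ha).resolve_left hu
  · intro h u v huv a ha
    by_cases hu : u ∈ a.support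
    · exact Or.inl hu
    · exact Or.inr (h a ha u v huv hu)

/-- Koszul homology of `R/J(G)` in terms of chains of polynomials. -/
lemma kexact_quot_iff (G : SimpleGraph (Fin n)) (i : ℕ) :
    KExact (X : Fin n → MvPolynomial (Fin n) K) (MvPolynomial (Fin n) K ⧸ coverIdeal K G) i ↔
      PExact K Set.univ (covers G) Set.univ i := by
  have hmk : ∀ f : Finset (Fin n) → MvPolynomial (Fin n) K,
      (fun S => (coverIdeal K G).mkQ (f S)) = 0 ↔ InMon (covers G) f := by
    intro f
    rw [funext_iff]
    refine forall_congr' fun S => ?_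
    rw [Submodule.mkQ_apply, Pi.zero_apply, Submodule.Quotient.mk_eq_zero, mem_coverIdeal]
  have hdeg : ∀ (j : ℕ) (f : Finset (Fin n) → MvPolynomial (Fin n) K),
      PChain Set.univ Set.univ j f ↔ IsDeg j f := by
    intro j f
    refine forall_congr' fun S => ?_
    constructor
    · intro h hS
      obtain ⟨a, ha⟩ := exists_coeff_ne_zero hS
      exact (h a ha).1
    · intro h a ha
      exact ⟨h fun h0 => ha (by rw [h0, coeff_zero]), trivial, trivial⟩
  have hpush : ∀ {j : ℕ} {f : Finset (Fin n) → MvPolynomial (Fin n) K}, IsDeg j f →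
      IsDeg j (fun S => (coverIdeal K G).mkQ (f S)) :=
    fun hf S hS => hf S fun h => hS (by simp [h])
  unfold KExact PExact
  simp only [hdeg]
  constructor
  · intro h f hf hcyc
    obtain ⟨u, hu, hu'⟩ := h _ (hpush hf) (by rw [kd_comp, hmk]; exact hcyc)
    obtain ⟨w, hw, rfl⟩ := exists_lift _ (Submodule.mkQ_surjective _) u hu
    refine ⟨w, hw, (hmk _).mp ?_⟩
    rw [kd_comp] at hu'
    funext S
    rw [Pi.sub_apply, map_sub, ← congrFun hu' S, sub_self]
    rfl
  · intro h f hf hcyc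
    obtain ⟨g, hg, rfl⟩ := exists_lift _ (Submodule.mkQ_surjective _) f hf
    obtain ⟨u, hu, hu'⟩ := h g hg (by rw [← hmk, ← kd_comp]; exact hcyc)
    refine ⟨_, hpush hu, ?_⟩
    rw [kd_comp]
    funext S
    have := congrFun ((hmk _).mpr hu') S
    rw [Pi.sub_apply, map_sub] at this
    exact (sub_eq_zero.mp this).symm

/-- In multidegree `W`, the Koszul homology of `R/J(G)` is the homology of the simplex on
`W` relative to the link of the complement of `W`. -/
lemma mexact_covers_iff (G : SimpleGraph (Fin n)) (W : Finset (Fin n)) (i : ℕ) :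
    MExact K Set.univ (covers G) (ind W) i ↔ LExact K (nonfaces G) Wᶜ W i := by
  have hch : ∀ (j : ℕ) (g : Finset (Fin n) → K),
      MChain Set.univ (ind W) j g ↔ g ∈ simpChains K W j := by
    intro j g
    rw [mchain_iff]
    refine forall_congr' fun S => imp_congr_right fun _ => ?_
    simp [and_comm]
  have hcov : ∀ g : Finset (Fin n) → K, (∀ T, g T ≠ 0 → T ⊆ W) →
      ((∀ T, g T ≠ 0 → (ind W - ind T).support ∈ covers G) ↔
        ∀ T, T ⊆ W → Wᶜ ∪ T ∈ nonfaces G → g T = 0) := by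
    intro g hg
    have : ∀ T, (W \ T)ᶜ = Wᶜ ∪ T := by
      intro T; ext k; simp [imp_iff_not_or]
    simp only [support_ind_sub, covers, Set.mem_ofPred_eq, this]
    constructor
    · intro h T _ hT'
      by_contra h0
      exact h T h0 hT'
    · intro h T h0 hT'
      exact h0 (h T (hg T h0) hT')
  have hsub : ∀ {j : ℕ} {g : Finset (Fin n) → K}, g ∈ simpChains K W j →
      ∀ T, kd (1 : Fin n → K) g T ≠ 0 → T ⊆ W := by
    intro j g hg T hT
    by_contra hTW
    exact hT (kd_apply_eq_zero_of_mem_sub hg hTW)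
  unfold MExact LExact
  simp only [hch]
  refine forall_congr' fun g => forall_congr' fun hg => ?_
  rw [hcov _ (hsub hg)]
  refine imp_congr_right fun _ => exists_congr fun u => and_congr_right fun hu => ?_
  rw [hcov]
  · simp only [Pi.sub_apply, sub_eq_zero]
  · intro T hT
    by_contra hTW
    refine hT ?_
    rw [Pi.sub_apply, kd_apply_eq_zero_of_mem_sub hu hTW, sub_zero]
    exact not_not.mp fun h => hTW (hg T h).1

/-- For every `W`, the simplex on `W` relative to the restriction of the independence complex to
`W` has no homology in degree `t` (counted by the number of vertices). -/
def RVanish (K : Type*) [Field K] (G : SimpleGraph (Fin n)) (t : ℕ) : Prop :=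
  ∀ W, LExact K (nonfaces G) ∅ W t

lemma kvanish_iff (G : SimpleGraph (Fin n)) (e : ℕ) :
    KVanish (X : Fin n → MvPolynomial (Fin n) K) (MvPolynomial (Fin n) K ⧸ coverIdeal K G) e ↔
      ∀ t, n < t + e → RVanish K G t := by
  have h := links_iff_restrictions (K := K) (isUpperSet_nonfaces G) (n + 1 - e)
  have hr : ∀ t, n + 1 - e ≤ t ↔ n < t + e := fun t => by omega
  simp only [hr] at h
  unfold RVanish KVanish
  rw [← h]
  simp only [kexact_quot_iff, pexact_iff_squarefree, mexact_covers_iff, Set.mem_univ, true_imp_iff]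

lemma RVanish.of_lt (G : SimpleGraph (Fin n)) {t : ℕ} (ht : n < t) : RVanish K G t := by
  intro W g hg _
  have : g = 0 := by
    funext S
    by_contra h
    have h1 := (hg S h).2
    have := Finset.card_le_univ S
    rw [Fintype.card_fin] at this
    omega
  exact ⟨0, Submodule.zero_mem _, fun T _ _ => by rw [this, map_zero]⟩

lemma not_rvanish_two {G : SimpleGraph (Fin n)} (hG : G.edgeSet.Nonempty) : ¬ RVanish K G 2 := by
  obtain ⟨e, he⟩ := hG
  induction e using Sym2.ind with
  | _ a b =>
  rw [SimpleGraph.mem_edgeSet] at he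
  intro h
  have hcard : 0 + 2 = ({a, b} : Finset (Fin n)).card := by
    rw [Finset.card_pair he.ne]
  -- The generator `x_a x_b` gives a nonzero class in homological degree `0`.
  have := (mexact_iff_lexact (K := K) (isUpperSet_nonfaces G) hcard).mpr (h _)
  unfold MExact at this
  simp only [Set.mem_empty_iff_false, imp_false, ne_eq, not_not, mchain_iff] at this
  obtain ⟨u, hu, hu'⟩ := this (Pi.single ∅ 1) (by
    intro S hS
    have hS0 : S = ∅ := by
      by_contra h0
      exact hS (by simp [h0])
    subst hS0
    exact ⟨rfl, Finset.empty_subset _, a, b, he, by simp, by simp⟩) (by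
    intro T
    rw [kd_apply]
    refine Finset.sum_eq_zero fun l _ => ?_
    rw [contr_apply]
    simp)
  have h0 : u = 0 := by
    funext S
    by_contra hS
    obtain ⟨h1, h2, c, d, hcd, hc, hd⟩ := hu S hS
    obtain ⟨l, rfl⟩ := Finset.card_eq_one.mp h1
    simp only [Finset.mem_sdiff, Finset.mem_insert, Finset.mem_singleton] at hc hd
    have hl := h2 (Finset.mem_singleton_self l)
    simp only [Finset.mem_insert, Finset.mem_singleton] at hl
    have := hcd.ne
    grind
  have := hu' ∅
  rw [h0, map_zero] at this
  simp at this

end Graph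

/-! ### Betti numbers of the edge ideal -/

section Betti

variable {n : ℕ} {K : Type*} [Field K]

lemma koszulD_eq (f : Finset (Fin n) → MvPolynomial (Fin n) K) :
    koszulD K n (MvPolynomial (Fin n) K) f = kd (X : Fin n → MvPolynomial (Fin n) K) f := by
  funext T
  rw [kd_apply]
  change ∑ l ∈ Tᶜ, _ = _
  rw [← Finset.sum_subset (Finset.subset_univ Tᶜ)]
  · refine Finset.sum_congr rfl fun l hl => ?_
    rw [contr_apply, if_neg (Finset.mem_compl.mp hl), smul_comm]
    rfl
  · intro l _ hl
    rw [contr_apply, if_pos (by simpa using hl), smul_zero]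

lemma mem_koszulPart (G : SimpleGraph (Fin n)) (i : ℕ) (j : ℤ)
    (f : Finset (Fin n) → MvPolynomial (Fin n) K) :
    f ∈ koszulPart K n (MvPolynomial (Fin n) K) (idealGrading K n (edgeIdeal K G)) i j ↔
      PChain (nonfaces G) {b | (b.degree : ℤ) = j} i f := by
  change (∀ S : Finset (Fin n), if S.card = i then
    f S ∈ idealGrading K n (edgeIdeal K G) (j - i) else f S = 0) ↔ _
  refine forall_congr' fun S => ?_
  by_cases hS : S.card = i
  · rw [if_pos hS]
    simp only [hS, true_and, Set.mem_ofPred_eq, map_add, degree_ind]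
    unfold idealGrading
    split_ifs with hj
    · rw [Submodule.mem_inf, Submodule.restrictScalars_mem, mem_edgeIdeal,
        mem_homogeneousSubmodule, IsHomogeneous, IsWeightedHomogeneous, ← forall_and]
      refine forall_congr' fun a => ?_
      rw [← imp_and]
      refine imp_congr_right fun _ => and_congr_right fun _ => ?_
      have hw : Finsupp.weight (1 : Fin n → ℕ) a = a.degree :=
        (DFunLike.congr_fun (Finsupp.degree_eq_weight_one (R := ℕ)) a).symm
      rw [hw]
      push_cast
      omega
    · rw [Submodule.mem_bot]
      constructor
      · rintro h0 a ha
        exact absurd (by rw [h0, coeff_zero]) ha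
      · intro h
        by_contra h0
        obtain ⟨a, ha⟩ := exists_coeff_ne_zero h0
        have := (h a ha).2
        push_cast at this
        omega
  · rw [if_neg hS]
    simp only [hS, false_and, imp_false, not_not]
    exact ⟨fun h a => by rw [h, coeff_zero], fun h => by ext a; rw [h, coeff_zero]⟩

lemma finite_koszulPart (I : Ideal (MvPolynomial (Fin n) K)) (i : ℕ) (j : ℤ) :
    FiniteDimensional K (koszulPart K n (MvPolynomial (Fin n) K) (idealGrading K n I) i j) := by
  have hfin : ∀ d, Module.Finite K (homogeneousSubmodule (Fin n) K d) := fun d =>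
    Module.Finite.iff_fg.mpr (homogeneousSubmodule_fg _ K d)
  let φ : (Finset (Fin n) → homogeneousSubmodule (Fin n) K (j - i).toNat) →ₗ[K]
      (Finset (Fin n) → MvPolynomial (Fin n) K) :=
    LinearMap.pi fun S => (Submodule.subtype _).comp (LinearMap.proj S)
  refine Submodule.finiteDimensional_of_le (S₂ := LinearMap.range φ) fun f hf => ?_
  have hf' : ∀ S, f S ∈ homogeneousSubmodule (Fin n) K (j - i).toNat := by
    intro S
    have h := hf S
    split_ifs at h
    · unfold idealGrading at h
      split_ifs at h
      · exact (Submodule.mem_inf.mp h).2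
      · rw [(Submodule.mem_bot K).mp h]; exact Submodule.zero_mem _
    · rw [h]; exact Submodule.zero_mem _
  exact ⟨fun S => ⟨f S, hf' S⟩, rfl⟩

/-- A graded Betti number vanishes exactly when the corresponding graded piece of the Koszul
complex is exact. -/
lemma bettiIdeal_eq_zero_iff (G : SimpleGraph (Fin n)) (i : ℕ) (j : ℤ) :
    bettiIdeal K n (edgeIdeal K G) i j = 0 ↔
      PExact K (nonfaces G) ∅ {b | (b.degree : ℤ) = j} i := by
  have hfin := finite_koszulPart (edgeIdeal K G) i j
  have hmon : ∀ f : Finset (Fin n) → MvPolynomial (Fin n) K, InMon ∅ f ↔ f = 0 := by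
    intro f
    rw [funext_iff]
    refine forall_congr' fun S => ?_
    simp only [Set.mem_empty_iff_false, imp_false, not_not, Pi.zero_apply]
    exact ⟨fun h => by ext a; rw [h, coeff_zero], fun h a => by rw [h, coeff_zero]⟩
  unfold bettiIdeal gradedBetti
  dsimp only
  set V := idealGrading K n (edgeIdeal K G)
  set Z := LinearMap.ker (koszulD K n (MvPolynomial (Fin n) K)) ⊓
    koszulPart K n (MvPolynomial (Fin n) K) V i j with hZ
  have : FiniteDimensional K Z := Submodule.finiteDimensional_of_le inf_le_right
  rw [Module.finrank_zero_iff, Submodule.Quotient.subsingleton_iff,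
    Submodule.comap_subtype_eq_top]
  unfold PExact
  simp only [hmon, ← mem_koszulPart, sub_eq_zero]
  constructor
  · intro h f hf hcyc
    obtain ⟨u, hu, rfl⟩ := h (show f ∈ Z from ⟨by
      rw [SetLike.mem_coe, LinearMap.mem_ker, koszulD_eq, hcyc], hf⟩)
    exact ⟨u, hu, koszulD_eq u⟩
  · rintro h f ⟨hcyc, hf⟩
    rw [SetLike.mem_coe, LinearMap.mem_ker, koszulD_eq] at hcyc
    obtain ⟨u, hu, rfl⟩ := h f hf hcyc
    exact ⟨u, hu, koszulD_eq u⟩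

/-- Hochster's formula, as far as nonvanishing is concerned. -/
lemma exists_bettiIdeal_ne_zero_iff (G : SimpleGraph (Fin n)) (d : ℤ) :
    (∃ (i : ℕ) (j : ℤ), bettiIdeal K n (edgeIdeal K G) i j ≠ 0 ∧ d = j - (i : ℤ)) ↔
      ∃ t : ℕ, ¬ RVanish K G t ∧ d = t := by
  have hE := isUpperSet_nonfaces G
  simp only [ne_eq, bettiIdeal_eq_zero_iff, pexact_iff_squarefree, Set.mem_ofPred_eq, degree_ind,
    RVanish, not_forall]
  constructor
  · rintro ⟨i, j, ⟨W, rfl, hW⟩, rfl⟩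
    by_cases hi : i ≤ W.card
    · refine ⟨W.card - i, ⟨W, ?_⟩, by omega⟩
      rwa [← mexact_iff_lexact hE (show i + (W.card - i) = W.card by omega)]
    -- There are no nonzero chains on `W` in homological degree exceeding `|W|`.
    · refine absurd (fun g hg _ => ⟨0, fun S hS => absurd rfl hS, fun T hT => ?_⟩) hW
      rw [map_zero, sub_zero] at hT
      obtain ⟨h1, h2, -⟩ := (mchain_iff W i g).mp hg T hT
      have := Finset.card_le_card h2
      omega
  · rintro ⟨t, ⟨W, hW⟩, rfl⟩
    by_cases ht : t ≤ W.card
    · refine ⟨W.card - t, W.card, ⟨W, rfl, ?_⟩, by omega⟩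
      rwa [mexact_iff_lexact hE (show W.card - t + t = W.card by omega)]
    · refine absurd (fun g hg _ => ⟨0, Submodule.zero_mem _, fun T _ _ => ?_⟩) hW
      have : g T = 0 := by
        by_contra h
        obtain ⟨h1, h2⟩ := hg T h
        have := Finset.card_le_card h1
        omega
      rw [this, map_zero]; rfl

end Betti

/-! ### Depth of the cover ideal -/

section Conclusion

variable {n : ℕ} {K : Type*} [Field K]

lemma coverIdeal_le_ker {G : SimpleGraph (Fin n)} (hG : G.edgeSet.Nonempty) :
    coverIdeal K G ≤ RingHom.ker (constantCoeff : MvPolynomial (Fin n) K →+* K) := by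
  obtain ⟨e, he⟩ := hG
  induction e using Sym2.ind with
  | _ a b =>
  refine (iInf_le_of_le a (iInf_le_of_le b (iInf_le _ he))).trans ?_
  rw [Ideal.span_le]
  rintro p (rfl | rfl) <;> simp [RingHom.mem_ker]

lemma maxIdeal_le_ker :
    maxIdeal K n ≤ RingHom.ker (constantCoeff : MvPolynomial (Fin n) K →+* K) := by
  unfold maxIdeal
  rw [Ideal.span_le]
  rintro _ ⟨l, rfl⟩
  simp [RingHom.mem_ker]

/-- For elements of the maximal homogeneous ideal, the properness condition in the definition of
a regular sequence on `R/J(G)` is automatic. -/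
lemma isRegular_quot_coverIdeal_iff {G : SimpleGraph (Fin n)} (hG : G.edgeSet.Nonempty)
    {rs : List (MvPolynomial (Fin n) K)} (hrs : ∀ r ∈ rs, r ∈ maxIdeal K n) :
    RingTheory.Sequence.IsRegular (MvPolynomial (Fin n) K ⧸ coverIdeal K G) rs ↔
      RingTheory.Sequence.IsWeaklyRegular (MvPolynomial (Fin n) K ⧸ coverIdeal K G) rs := by
  refine ⟨fun h => h.toIsWeaklyRegular, fun h => ⟨h, fun htop => ?_⟩⟩
  set Q := RingHom.ker (constantCoeff : MvPolynomial (Fin n) K →+* K)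
  have hle : Ideal.ofList rs ≤ Q := by
    unfold Ideal.ofList
    rw [Ideal.span_le]
    exact fun r hr => maxIdeal_le_ker (hrs r hr)
  have h1 : (⊤ : Submodule (MvPolynomial (Fin n) K) (MvPolynomial (Fin n) K ⧸ coverIdeal K G)) ≤
      Submodule.map (coverIdeal K G).mkQ Q := by
    rw [htop, Submodule.smul_le]
    intro r hr m _
    obtain ⟨p, rfl⟩ := Submodule.mkQ_surjective _ m
    refine ⟨r * p, Ideal.mul_mem_right p Q (hle hr), ?_⟩
    rw [← smul_eq_mul, map_smul]
  obtain ⟨p, hp, hp'⟩ := h1 (Submodule.mem_top (x := (coverIdeal K G).mkQ 1))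
  have h2 : p - 1 ∈ coverIdeal K G := by
    rw [← Submodule.ker_mkQ (coverIdeal K G), LinearMap.mem_ker, map_sub, hp', sub_self]
  have h3 : (1 : MvPolynomial (Fin n) K) ∈ Q := by
    have := Q.sub_mem hp (coverIdeal_le_ker hG h2)
    rwa [sub_sub_cancel] at this
  rw [RingHom.mem_ker, map_one] at h3
  exact one_ne_zero h3

lemma exists_isRegular_quot_coverIdeal_iff {G : SimpleGraph (Fin n)} (hG : G.edgeSet.Nonempty) (d : ℕ) :
    (∃ rs : List (MvPolynomial (Fin n) K), rs.length = d ∧ (∀ r ∈ rs, r ∈ maxIdeal K n) ∧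
      RingTheory.Sequence.IsRegular (MvPolynomial (Fin n) K ⧸ coverIdeal K G) rs) ↔
    KVanish (X : Fin n → MvPolynomial (Fin n) K) (MvPolynomial (Fin n) K ⧸ coverIdeal K G) d := by
  constructor
  · rintro ⟨rs, rfl, hrs, h⟩
    exact KVanish.of_isWeaklyRegular rs hrs h.toIsWeaklyRegular
  · intro h
    obtain ⟨rs, hd, hrs, h⟩ := KVanish.exists_isWeaklyRegular d h
    exact ⟨rs, hd, hrs, (isRegular_quot_coverIdeal_iff hG hrs).mpr h⟩

end Conclusion

/-- For a graph `G` on `{1,…,n}` with at least one edge,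
`depth(R/J(G)) = n - reg(I(G))`. -/
theorem depth_coverIdeal_eq_sub_reg_edgeIdeal (K : Type*) [Field K] (n : ℕ)
    (G : SimpleGraph (Fin n)) (hG : G.edgeSet.Nonempty) :
    (depthQuot K n (coverIdeal K G) : ℤ) = (n : ℤ) - regIdeal K n (edgeIdeal K G) := by
  classical
  have hbdd : ∀ t, ¬ RVanish K G t → t ≤ n := fun t ht => by
    by_contra h
    exact ht (RVanish.of_lt G (by omega))
  obtain ⟨m, hm, hmax⟩ : ∃ m, ¬ RVanish K G m ∧ ∀ t, ¬ RVanish K G t → t ≤ m := by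
    have h2 := not_rvanish_two (K := K) hG
    exact ⟨Nat.findGreatest (fun t => ¬ RVanish K G t) n,
      Nat.findGreatest_spec (P := fun t => ¬ RVanish K G t) (hbdd 2 h2) h2,
      fun t ht => Nat.le_findGreatest (hbdd t ht) ht⟩
  have hreg : regIdeal K n (edgeIdeal K G) = m := by
    unfold regIdeal
    simp only [exists_bettiIdeal_ne_zero_iff]
    refine IsGreatest.csSup_eq ⟨⟨m, hm, rfl⟩, ?_⟩
    rintro _ ⟨t, ht, rfl⟩
    exact_mod_cast hmax t ht
  have hdepth : depthQuot K n (coverIdeal K G) = n - m := by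
    unfold depthQuot
    simp only [exists_isRegular_quot_coverIdeal_iff hG, kvanish_iff]
    have hmn := hbdd m hm
    refine IsGreatest.csSup_eq ⟨fun t ht => ?_, fun e he => ?_⟩
    · by_contra h
      have := hmax t h
      omega
    · have h : ¬ n < m + e := fun h => hm (he m h)
      omega
  have := hbdd m hm
  rw [hreg, hdepth]
  omega
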